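/- arXiv:1806.03625 — 4 statements merged into one kernel-verified Lean document; each statement's English description precedes it below -/
import Mathlib

section
/- Let t ≥ 3 be an integer and let M be a matroid admitting a cyclic (t−1,t)-ordering e_1, e_2, …, e_n with n ≥ 6t−10. Then n is even, and for every index i there is exactly one t-element circuit of M containing X_i = {e_i, e_{i+1}, …, e_{i+t−2}} and exactly one t-element cocircuit of M containing X_i. -/
open Set

namespace CyclicArr

variable {α : Type*}

/-- `C` is a circuit of the matroid `M`: a minimal dependent set. -/
def Cct (M : Matroid α) (C : Set α) : Prop := Minimal M.Dep C

/-- The set of `len` consecutive elements `{e_i, e_{i+1}, …, e_{i+len-1}}`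
in a cyclic ordering `e`, subscripts mod `n`. -/
def seg {n : ℕ} (e : ZMod n → α) (i : ℤ) (len : ℕ) : Set α :=
  (fun k : ℕ => e ((i + k : ℤ) : ZMod n)) '' Set.Iio len

/-- `e` is a cyclic ordering of (the ground set of) `M`. -/
def CyclicOrd {n : ℕ} (M : Matroid α) (e : ZMod n → α) : Prop :=
  Function.Injective e ∧ Set.range e = M.E

/-- `e` is a cyclic `(t-1, t)`-ordering of `M`: every `t-1` consecutive elements
are contained in a `t`-element circuit and a `t`-element cocircuit. -/
def CyclicPropOrd {n : ℕ} (M : Matroid α) (t : ℕ) (e : ZMod n → α) : Prop :=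
  CyclicOrd M e ∧
  ∀ i : ℤ, (∃ C, Cct M C ∧ C.ncard = t ∧ seg e i (t-1) ⊆ C) ∧
           (∃ C, Cct M✶ C ∧ C.ncard = t ∧ seg e i (t-1) ⊆ C)


/-- abstract half structure -/
structure Half (T n : ℤ) (P Q : ℤ → ℤ → Prop) : Prop where
  ex : ∀ i, ∃ x, P i x ∧ i + T - 2 < x ∧ x < i + n
  per : ∀ i x, P i x ↔ P i (x + n)
  per1 : ∀ i x, P i x ↔ P (i + n) x
  la : ∀ i x, P i x → ¬ P (i + 1) x
  sw : ∀ i, P i (i + T - 1) ↔ P (i + 1) i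
  oR : ∀ i j x y, P i x → Q j y → j ≤ x → x ≤ j + T - 2 → i + T - 2 < j → j + T - 2 < i + n →
    j + T - 2 - n < y → y < j → i ≤ y ∧ y ≤ i + T - 2
  oL : ∀ i j x y, P i x → Q j y → j ≤ x → x ≤ j + T - 2 → j + T - 2 < i → i + T - 2 < j + n →
    j + T - 2 < y → y < j + n → i ≤ y ∧ y ≤ i + T - 2
  o2 : ∀ i x y, P i x → Q (i + T - 2) y → i + T - 2 < x → x < i + n →
    i + T - 2 + T - 2 - n < y → y < i + T - 2 → x ≤ i + T - 2 + T - 2 ∨ i ≤ y ∨ x = y + n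

theorem Half.refl' {T n : ℤ} {P Q : ℤ → ℤ → Prop} (h : Half T n P Q) (h' : Half T n Q P) :
    Half T n (fun i x => P (-i - T + 2) (-x)) (fun i x => Q (-i - T + 2) (-x)) where
  ex i := by
    obtain ⟨x, hx, h1, h2⟩ := h.ex (-i - T + 2)
    refine ⟨-(x - n), ?_, by omega, by omega⟩
    rw [neg_neg, h.per]; simpa using hx
  per i x := by
    rw [h.per _ (-(x + n))]
    rw [show -(x + n) + n = -x by ring]
  per1 i x := by
    rw [h.per1 (-(i + n) - T + 2)]
    rw [show -(i + n) - T + 2 + n = -i - T + 2 by ring]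
  la i x h1 h2 := by
    refine h.la _ _ h2 ?_
    convert h1 using 1; ring
  sw i := by
    have := h.sw (-i - T + 1)
    rw [show -i - T + 1 + T - 1 = -i by ring, show -i - T + 1 + 1 = -i - T + 2 by ring] at this
    rw [show -(i + 1) - T + 2 = -i - T + 1 by ring, show -(i + T - 1) = -i - T + 1 by ring]
    exact this.symm
  oR i j x y hx hy a1 a2 a3 a4 a5 a6 := by
    have := h.oL _ _ _ _ hx hy (by omega) (by omega) (by omega) (by omega) (by omega) (by omega)
    omega
  oL i j x y hx hy a1 a2 a3 a4 a5 a6 := by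
    have := h.oR _ _ _ _ hx hy (by omega) (by omega) (by omega) (by omega) (by omega) (by omega)
    omega
  o2 i x y hx hy a1 a2 a3 a4 := by
    have := h'.o2 (-(i + T - 2) - T + 2) (-y) (-x) hy
      (by convert hx using 1; ring) (by omega) (by omega) (by omega) (by omega)
    omega

theorem far {T n : ℤ} (hT : 3 ≤ T) (hn : 6 * T - 10 ≤ n) {P Q : ℤ → ℤ → Prop}
    (h : Half T n P Q) (h' : Half T n Q P) (i p : ℤ) (hp : P i p) (b1 : i + 3 * T - 5 ≤ p)
    (b2 : p ≤ i + n - 2 * T + 3) : False := by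
  have exL : ∀ j, ∃ y, Q j y ∧ j + T - 2 - n < y ∧ y < j := by
    intro j
    obtain ⟨y, hy, _, _⟩ := h'.ex j
    exact ⟨y - n, by rw [h'.per]; simpa using hy, by omega, by omega⟩
  have exL' : ∀ j, ∃ y, P j y ∧ j + T - 2 - n < y ∧ y < j := by
    intro j
    obtain ⟨y, hy, _, _⟩ := h.ex j
    exact ⟨y - n, by rw [h.per]; simpa using hy, by omega, by omega⟩
  obtain ⟨q1, hq1, _, _⟩ := exL p
  have c1 := h.oR i p p q1 hp hq1 (by omega) (by omega) (by omega) (by omega) (by omega) (by omega)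
  obtain ⟨q2, hq2, _, _⟩ := exL (p - T + 2)
  have c2 := h.oR i (p - T + 2) p q2 hp hq2 (by omega) (by omega) (by omega) (by omega) (by omega)
    (by omega)
  have w1 : ∀ l x, P l x → i - T + 2 ≤ l → l ≤ i + T - 2 → l ≤ q1 → q1 ≤ l + T - 2 →
      l + T - 2 < x → x < l + n → p ≤ x ∧ x ≤ p + T - 2 := by
    intro l x hx _ _ _ _ _ _
    exact h'.oL p l q1 x hq1 hx (by omega) (by omega) (by omega) (by omega) (by omega) (by omega)
  have w2 : ∀ l x, P l x → i - T + 2 ≤ l → l ≤ i + T - 2 → l ≤ q2 → q2 ≤ l + T - 2 →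
      l + T - 2 < x → x < l + n → p - T + 2 ≤ x ∧ x ≤ p := by
    intro l x hx _ _ _ _ _ _
    have := h'.oL (p - T + 2) l q2 x hq2 hx (by omega) (by omega) (by omega) (by omega) (by omega)
      (by omega)
    omega
  have k1 : q1 = i ∨ q2 = i := by
    by_contra hc
    obtain ⟨x, hx, _, _⟩ := h.ex (i + 1)
    have u1 := w1 _ _ hx (by omega) (by omega) (by omega) (by omega) (by omega) (by omega)
    have u2 := w2 _ _ hx (by omega) (by omega) (by omega) (by omega) (by omega) (by omega)
    obtain rfl : x = p := by omega
    exact h.la _ _ hp hx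
  have k2 : q1 = i + T - 2 ∨ q2 = i + T - 2 := by
    by_contra hc
    obtain ⟨x, hx, _, _⟩ := h.ex (i - 1)
    have u1 := w1 _ _ hx (by omega) (by omega) (by omega) (by omega) (by omega) (by omega)
    have u2 := w2 _ _ hx (by omega) (by omega) (by omega) (by omega) (by omega) (by omega)
    obtain rfl : x = p := by omega
    exact h.la _ _ hx (by simpa using hp)
  have v1 : ∀ l x, P l x → i - T + 2 ≤ l → l ≤ i → l + T - 2 < x → x < l + n →
      p - T + 2 ≤ x ∧ x ≤ p + T - 2 := by
    intro l x hx _ _ _ _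
    rcases k1 with k | k
    · have := w1 _ _ hx (by omega) (by omega) (by omega) (by omega) (by omega) (by omega)
      omega
    · have := w2 _ _ hx (by omega) (by omega) (by omega) (by omega) (by omega) (by omega)
      omega
  have v2 : ∀ l x, P l x → i ≤ l → l ≤ i + T - 2 → l + T - 2 < x → x < l + n →
      p - T + 2 ≤ x ∧ x ≤ p + T - 2 := by
    intro l x hx _ _ _ _
    rcases k2 with k | k
    · have := w1 _ _ hx (by omega) (by omega) (by omega) (by omega) (by omega) (by omega)
      omega
    · have := w2 _ _ hx (by omega) (by omega) (by omega) (by omega) (by omega) (by omega)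
      omega
  have r1 : Q (i + T - 2) p := by
    obtain ⟨y, hy, _, _⟩ := exL (i + T - 2)
    have := h.o2 i p y hp hy (by omega) (by omega) (by omega) (by omega)
    rcases this with hh | hh | hh
    · omega
    · exfalso
      obtain ⟨x, hx, _, _⟩ := h.ex (y - T + 2)
      have u1 := v1 _ _ hx (by omega) (by omega) (by omega) (by omega)
      have u2 := h'.oL (i + T - 2) (y - T + 2) y x hy hx (by omega) (by omega) (by omega)
        (by omega) (by omega) (by omega)
      omega
    · rw [hh, ← h'.per]; exact hy
  have r2 : Q (i - T + 2) p := by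
    obtain ⟨y, hy, _, _⟩ := h'.ex (i - T + 2)
    have := h'.o2 (i - T + 2) y (p - n) hy (by
      rw [h.per, show i - T + 2 + T - 2 = i by ring]; simpa using hp)
      (by omega) (by omega) (by omega) (by omega)
    rcases this with hh | hh | hh
    · exfalso
      obtain ⟨x, hx, _, _⟩ := h.ex y
      have u1 := v2 _ _ hx (by omega) (by omega) (by omega) (by omega)
      have u2 := h'.oR (i - T + 2) y y (x - n) hy (by rw [h.per]; simpa using hx)
        (by omega) (by omega) (by omega) (by omega) (by omega) (by omega)
      omega
    · omega
    · rwa [show p = y by omega]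
  obtain ⟨x, hx, _, _⟩ := exL' p
  have u1 := h'.oR _ p p x r1 hx (by omega) (by omega) (by omega) (by omega) (by omega) (by omega)
  have u2 := h'.oR _ p p x r2 hx (by omega) (by omega) (by omega) (by omega) (by omega) (by omega)
  omega

theorem near {T n : ℤ} (hT : 3 ≤ T) (hn : 6 * T - 10 ≤ n) (m : ℕ) : ∀ (g : ℤ), 2 ≤ g →
    g ≤ 3 * T - 5 → 3 * T - 5 - g = m → ∀ (P Q : ℤ → ℤ → Prop),
    Half T n P Q → Half T n Q P → ∀ i, ¬ P i (i + T - 2 + g) := by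
  induction m using Nat.strong_induction_on with
  | _ m ih =>
  intro g hg1 hg2 hm P Q h h' i hp
  by_cases hf : 2 * T - 3 ≤ g
  · exact far hT hn h h' i _ hp (by omega) (by omega)
  have ihR : ∀ g', g < g' → g' ≤ 3 * T - 5 → ∀ (P Q : ℤ → ℤ → Prop),
    Half T n P Q → Half T n Q P → ∀ i, ¬ P i (i + T - 2 + g') := by
    intro g' _ _
    exact ih (3 * T - 5 - g').toNat (by omega) g' (by omega) (by omega) (by omega)
  have ihL : ∀ g', g < g' → g' ≤ 3 * T - 5 → ∀ i, ¬ Q i (i - g') := by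
    intro g' a b i hi
    refine ihR g' a b _ _ (h'.refl' h) (h.refl' h') (-i - T + 2) ?_
    convert hi using 1 <;> ring
  have step1 : ∀ i, P i (i + T - 2 + g) → Q (i + T - 2 + g) (i + T - 2) := by
    intro i hp
    obtain ⟨y, hy, _, _⟩ := h'.ex (i + T - 2 + g)
    have hy' : Q (i + T - 2 + g) (y - n) := by rw [h'.per]; simpa using hy
    have u := h.oR i _ _ _ hp hy' (by omega) (by omega) (by omega) (by omega) (by omega) (by omega)
    by_cases hc : y - n = i + T - 2
    · rwa [hc] at hy'
    · exfalso
      refine ihL (i + T - 2 + g - (y - n)) (by omega) (by omega) (i + T - 2 + g) ?_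
      simpa using hy'
  have step2 : ∀ i, P i (i + T - 2 + g) → P (i - 1) (i - 1 + T - 2 + g) := by
    intro i hp
    have hq := step1 i hp
    obtain ⟨y, hy, _, _⟩ := h'.ex (i + T - 2 + g - 1)
    have hy' : Q (i + T - 2 + g - 1) (y - n) := by rw [h'.per]; simpa using hy
    have u := h.oR i _ _ _ hp hy' (by omega) (by omega) (by omega) (by omega) (by omega) (by omega)
    have hq2 : y - n = i + T - 3 := by
      by_contra hc
      by_cases hc2 : y - n = i + T - 2
      · rw [hc2] at hy'
        exact h'.la _ _ hy' (by simpa using hq)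
      refine ihL (i + T - 2 + g - 1 - (y - n)) (by omega) (by omega) (i + T - 2 + g - 1) ?_
      simpa using hy'
    rw [hq2] at hy'
    obtain ⟨x, hx, _, _⟩ := h.ex (i - 1)
    have u := h'.oL _ (i - 1) _ x hy' hx (by omega) (by omega) (by omega) (by omega) (by omega)
      (by omega)
    by_cases hc : x = i - 1 + T - 2 + g
    · rwa [← hc]
    · exfalso
      refine ihR (x - (i - 1 + T - 2)) (by omega) (by omega) P Q h h' (i - 1) ?_
      simpa using hx
  have all : ∀ k : ℕ, P (i - k) (i - k + T - 2 + g) := by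
    intro k
    induction k with
    | zero => simpa using hp
    | succ k ihk =>
      have := step2 _ ihk
      push_cast
      rwa [show i - ((k : ℤ) + 1) = i - k - 1 by ring]
  have hl := step1 _ (all (2 * T - 4 + g).toNat)
  have hk : (((2 * T - 4 + g).toNat : ℕ) : ℤ) = 2 * T - 4 + g := by omega
  rw [hk, show i - (2 * T - 4 + g) + T - 2 + g = i - T + 2 by ring,
    show i - (2 * T - 4 + g) + T - 2 = i - T + 2 - g by ring, h'.per] at hl
  have := h'.o2 _ _ (i + T - 2 + g - n) hl (by
    rw [h.per, show i - T + 2 + T - 2 = i by ring]; simpa using hp)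
    (by omega) (by omega) (by omega) (by omega)
  omega

theorem main {T n : ℤ} (hT : 3 ≤ T) (hn : 6 * T - 10 ≤ n) {P Q : ℤ → ℤ → Prop}
    (h : Half T n P Q) (h' : Half T n Q P) (i x : ℤ) (hx : P i x) (h1 : i + T - 2 < x)
    (h2 : x < i + n) : x = i + T - 1 ∨ x = i + n - 1 := by
  by_contra hc
  by_cases c1 : x < i + 3 * T - 5
  · refine near hT hn (3 * T - 5 - (x - (i + T - 2))).toNat (x - (i + T - 2)) (by omega) (by omega)
      (by omega) P Q h h' i ?_
    simpa using hx
  by_cases c2 : x ≤ i + n - 2 * T + 3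
  · exact far hT hn h h' i x hx (by omega) (by omega)
  · refine near hT hn (3 * T - 5 - (i + n - x)).toNat (i + n - x) (by omega) (by omega)
      (by omega) _ _ (h.refl' h') (h'.refl' h) (-i - T + 2) ?_
    have : P i (x - n) := by rw [h.per]; simpa using hx
    convert this using 1 <;> ring

theorem alt {T n : ℤ} (hT : 3 ≤ T) (hn : 6 * T - 10 ≤ n) {P Q : ℤ → ℤ → Prop}
    (h : Half T n P Q) (h' : Half T n Q P) (i : ℤ) :
    P i (i + T - 1) ↔ ¬ P (i - 1) (i - 1 + T - 1) := by
  have key : ∀ {P Q : ℤ → ℤ → Prop}, Half T n P Q → Half T n Q P → ∀ i,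
      P i (i + T - 1) ∨ P (i - 1) (i - 1 + T - 1) := by
    intro P Q h h' i
    obtain ⟨x, hx, a, b⟩ := h.ex i
    rcases main hT hn h h' i x hx a b with c | c
    · left; rwa [← c]
    · right
      rw [h.sw, h.per, show i - 1 + 1 = i by ring, show i - 1 + n = x by omega]; exact hx
  have kR : P i (i + T - 1) → ¬ Q (i + T - 1) (i + T - 1 + T - 1) := by
    intro a b
    have b' : Q (i + T - 1) (i + T - 1 + T - 1 - n) := by rw [h'.per]; simpa using b
    have := h.oR _ _ _ _ a b' (by omega) (by omega) (by omega) (by omega) (by omega) (by omega)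
    omega
  have kL : P (i - 1) (i - 1 + T - 1) → ¬ Q (i - 1 + T - 1) (i - 1 + T - 1 + T - 1) := by
    intro a b
    have b' : Q (i - 1 + T - 1) (i - 1 + T - 1 + T - 1 - n) := by rw [h'.per]; simpa using b
    have := h.oR _ _ _ _ a b' (by omega) (by omega) (by omega) (by omega) (by omega) (by omega)
    omega
  constructor
  · intro a b
    rcases key h' h (i + T - 1) with c | c
    · exact kR a c
    · refine kL b ?_
      rwa [show i + T - 1 - 1 = i - 1 + T - 1 by ring] at c
  · intro a
    exact (key h h' i).resolve_right a

theorem evn {T : ℤ} {n : ℕ} (hT : 3 ≤ T) (hn : 6 * T - 10 ≤ n) {P Q : ℤ → ℤ → Prop}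
    (h : Half T n P Q) (h' : Half T n Q P) : Even n := by
  have key : ∀ k : ℕ, (P k (k + T - 1) ↔ P 0 (0 + T - 1)) ↔ Even k := by
    intro k
    induction k with
    | zero => simp
    | succ k ih =>
      have := alt hT hn h h' ((k + 1 : ℕ) : ℤ)
      rw [show (((k + 1 : ℕ) : ℤ) - 1) = k by push_cast; ring] at this
      rw [Nat.even_add_one, ← ih, this]
      tauto
  rw [← key n]
  have t1 := h.per1 0 (n + T - 1)
  have t2 := h.per 0 (0 + T - 1)
  rw [zero_add] at t1
  rw [← t1, t2, show 0 + T - 1 + (n : ℤ) = n + T - 1 by ring]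

theorem mem_seg {n : ℕ} (e : ZMod n → α) {t : ℕ} (ht : 3 ≤ t) (i : ℤ) (z : α) :
    z ∈ seg e i (t - 1) ↔ ∃ a : ℤ, i ≤ a ∧ a ≤ i + t - 2 ∧ z = e (a : ZMod n) := by
  constructor
  · rintro ⟨k, hk, rfl⟩
    simp only [Set.mem_Iio] at hk
    exact ⟨i + k, by omega, by omega, rfl⟩
  · rintro ⟨a, h1, h2, rfl⟩
    refine ⟨(a - i).toNat, ?_, ?_⟩
    · simp only [Set.mem_Iio]; omega
    · have : (((a - i).toNat : ℕ) : ℤ) = a - i := by omega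
      simp only [this]
      congr 2; ring

theorem e_inj {n : ℕ} {e : ZMod n → α} (he : Function.Injective e) {a b : ℤ}
    (h : e (a : ZMod n) = e (b : ZMod n)) (h1 : a - b < n) (h2 : b - a < n) : a = b := by
  have h3 := he h
  rw [ZMod.intCast_eq_intCast_iff_dvd_sub] at h3
  have := Int.eq_zero_of_abs_lt_dvd h3 (by rw [abs_lt]; constructor <;> omega)
  omega

theorem e_per {n : ℕ} (e : ZMod n → α) (a : ℤ) :
    e ((a + n : ℤ) : ZMod n) = e (a : ZMod n) := by simp

/-- the predicate -/
def WP {n : ℕ} (M : Matroid α) (t : ℕ) (e : ZMod n → α) (i x : ℤ) : Prop :=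
  M.IsCircuit (insert (e (x : ZMod n)) (seg e i (t - 1))) ∧ e (x : ZMod n) ∉ seg e i (t - 1)

theorem ncard_seg {n : ℕ} {e : ZMod n → α} (he : Function.Injective e) {t : ℕ} (ht : 3 ≤ t)
    (hn : t ≤ n) (i : ℤ) : (seg e i (t - 1)).ncard = t - 1 := by
  unfold seg
  rw [Set.InjOn.ncard_image]
  · rw [Set.ncard_eq_toFinset_card']; simp
  · intro a ha b hb hab
    simp only [Set.mem_Iio] at ha hb
    have := e_inj he hab (by omega) (by omega)
    omega

theorem seg_fin {n : ℕ} (e : ZMod n → α) (t : ℕ) (i : ℤ) : (seg e i t).Finite :=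
  (Set.finite_Iio t).image _

theorem of_cct {n : ℕ} {M : Matroid α} {t : ℕ} {e : ZMod n → α} (he : CyclicOrd M e)
    (ht : 3 ≤ t) (hn : t ≤ n) (i : ℤ) (C : Set α) (hC : Cct M C) (hc : C.ncard = t)
    (hs : seg e i (t - 1) ⊆ C) :
    ∃ x : ℤ, C = insert (e (x : ZMod n)) (seg e i (t - 1)) ∧ WP M t e i x ∧ i + t - 2 < x ∧
      x < i + n := by
  have hC' : M.IsCircuit C := hC
  have hns := ncard_seg he.1 ht hn i
  have hfin : C.Finite := Set.finite_of_ncard_pos (by omega)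
  have hd : (C \ seg e i (t - 1)).ncard = 1 := by
    rw [Set.ncard_sdiff hs (seg_fin _ _ _)]; omega
  obtain ⟨z, hz⟩ := Set.ncard_eq_one.1 hd
  have hzC : z ∈ C \ seg e i (t - 1) := by rw [hz]; rfl
  have hCe : C = insert z (seg e i (t - 1)) := by
    rw [← Set.sdiff_union_of_subset hs, hz]; rfl
  have hzE : z ∈ M.E := hC'.subset_ground hzC.1
  rw [← he.2] at hzE
  obtain ⟨r, rfl⟩ := hzE
  have : NeZero n := ⟨by omega⟩
  have hr : ((i + ((r - i).val : ℤ) : ℤ) : ZMod n) = r := by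
    push_cast; rw [ZMod.natCast_zmod_val]; ring
  have hlt := ZMod.val_lt (r - (i : ZMod n))
  refine ⟨i + (r - (i : ZMod n)).val, ?_, ?_, ?_, by omega⟩
  · rw [hr]; exact hCe
  · unfold WP; rw [hr]; exact ⟨hCe ▸ hC', hzC.2⟩
  · by_contra hcon
    apply hzC.2
    rw [mem_seg e ht]
    exact ⟨i + (r - (i : ZMod n)).val, by omega, by omega, by rw [hr]⟩

section
variable {n : ℕ} {M : Matroid α} {t : ℕ} {e : ZMod n → α}

theorem orth {C D : Set α} (hC : M.IsCircuit C) (hD : M✶.IsCircuit D) {w : α} (h1 : w ∈ C)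
    (h2 : w ∈ D) : ∃ z, z ≠ w ∧ z ∈ C ∧ z ∈ D := by
  have := hC.isCocircuit_inter_nontrivial hD ⟨w, h1, h2⟩
  obtain ⟨z, hz, hne⟩ := this.exists_ne w
  exact ⟨z, hne, hz.1, hz.2⟩

theorem wp_oR (he : Function.Injective e) (ht : 3 ≤ t) (i j x y : ℤ)
    (hx : WP M t e i x) (hy : WP M✶ t e j y) (a1 : j ≤ x) (a2 : x ≤ j + t - 2)
    (a3 : i + t - 2 < j) (a4 : j + t - 2 < i + n) (a5 : j + t - 2 - n < y) (a6 : y < j) :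
    i ≤ y ∧ y ≤ i + t - 2 := by
  obtain ⟨z, hz, hzC, hzD⟩ := orth hx.1 hy.1 (w := e (x : ZMod n)) (Set.mem_insert _ _)
    (Set.mem_insert_of_mem _ ((mem_seg e ht _ _).2 ⟨x, a1, a2, rfl⟩))
  rcases hzC with h | h
  · exact absurd h hz
  obtain ⟨a, b1, b2, rfl⟩ := (mem_seg e ht _ _).1 h
  rcases hzD with h' | h'
  · have := e_inj he h' (by omega) (by omega)
    omega
  · obtain ⟨b, b3, b4, hab⟩ := (mem_seg e ht _ _).1 h'
    have := e_inj he hab (by omega) (by omega)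
    omega

theorem wp_per (i x : ℤ) : WP M t e i x ↔ WP M t e i (x + n) := by
  unfold WP; rw [e_per e]

theorem seg_per (l : ℕ) (i : ℤ) : seg e (i + n) l = seg e i l := by
  unfold seg
  congr 1
  ext k
  rw [show i + (n : ℤ) + k = i + k + n by ring, e_per e]

theorem wp_per1 (i x : ℤ) : WP M t e i x ↔ WP M t e (i + n) x := by
  unfold WP; rw [seg_per]

theorem wp_oL (he : Function.Injective e) (ht : 3 ≤ t) (i j x y : ℤ)
    (hx : WP M t e i x) (hy : WP M✶ t e j y) (a1 : j ≤ x) (a2 : x ≤ j + t - 2)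
    (a3 : j + t - 2 < i) (a4 : i + t - 2 < j + n) (a5 : j + t - 2 < y) (a6 : y < j + n) :
    i ≤ y ∧ y ≤ i + t - 2 := by
  rw [wp_per1] at hy
  rw [wp_per] at hx
  exact wp_oR he ht i _ _ y hx hy (by omega) (by omega) (by omega) (by omega) (by omega) (by omega)

theorem wp_o2 (he : Function.Injective e) (ht : 3 ≤ t) (hn : 6 * t - 10 ≤ n) (i x y : ℤ)
    (hx : WP M t e i x) (hy : WP M✶ t e (i + t - 2) y) (a1 : i + t - 2 < x) (a2 : x < i + n)
    (a3 : i + t - 2 + t - 2 - n < y) (a4 : y < i + t - 2) :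
    x ≤ i + t - 2 + t - 2 ∨ i ≤ y ∨ x = y + n := by
  obtain ⟨z, hz, hzC, hzD⟩ := orth hx.1 hy.1 (w := e ((i + t - 2 : ℤ) : ZMod n))
    (Set.mem_insert_of_mem _ ((mem_seg e ht _ _).2 ⟨_, by omega, by omega, rfl⟩))
    (Set.mem_insert_of_mem _ ((mem_seg e ht _ _).2 ⟨_, by omega, by omega, rfl⟩))
  rcases hzC with h | h
  · rcases hzD with h' | h'
    · rw [h, ← e_per e y] at h'
      have := e_inj he h' (by omega) (by omega)
      omega
    · obtain ⟨b, b3, b4, hab⟩ := (mem_seg e ht _ _).1 h'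
      rw [h] at hab
      have := e_inj he hab (by omega) (by omega)
      omega
  · obtain ⟨a, b1, b2, rfl⟩ := (mem_seg e ht _ _).1 h
    rcases hzD with h' | h'
    · have := e_inj he h' (by omega) (by omega)
      omega
    · obtain ⟨b, b3, b4, hab⟩ := (mem_seg e ht _ _).1 h'
      have := e_inj he hab (by omega) (by omega)
      exact absurd (by rw [show a = i + t - 2 by omega]) hz

theorem wp_ex (he : CyclicPropOrd M t e) (ht : 3 ≤ t) (hn : 6 * t - 10 ≤ n) (i : ℤ) :
    ∃ x, WP M t e i x ∧ i + t - 2 < x ∧ x < i + n := by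
  obtain ⟨C, h1, h2, h3⟩ := (he.2 i).1
  obtain ⟨x, _, h⟩ := of_cct he.1 ht (by omega) i C h1 h2 h3
  exact ⟨x, h⟩

theorem dual_prop (he : CyclicPropOrd M t e) : CyclicPropOrd M✶ t e := by
  refine ⟨⟨he.1.1, by simpa using he.1.2⟩, fun i => ⟨(he.2 i).2, ?_⟩⟩
  rw [Matroid.dual_dual]; exact (he.2 i).1

theorem wp_sw (he : Function.Injective e) (ht : 3 ≤ t) (hn : 6 * t - 10 ≤ n) (i : ℤ) :
    WP M t e i (i + t - 1) ↔ WP M t e (i + 1) i := by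
  have n1 : e ((i + t - 1 : ℤ) : ZMod n) ∉ seg e i (t - 1) := by
    rw [mem_seg e ht]
    rintro ⟨a, h1, h2, h3⟩
    have := e_inj he h3 (by omega) (by omega)
    omega
  have n2 : e (i : ZMod n) ∉ seg e (i + 1) (t - 1) := by
    rw [mem_seg e ht]
    rintro ⟨a, h1, h2, h3⟩
    have := e_inj he h3 (by omega) (by omega)
    omega
  have hs : insert (e ((i + t - 1 : ℤ) : ZMod n)) (seg e i (t - 1)) =
      insert (e (i : ZMod n)) (seg e (i + 1) (t - 1)) := by
    ext z
    rw [Set.mem_insert_iff, Set.mem_insert_iff, mem_seg e ht, mem_seg e ht]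
    constructor
    · rintro (rfl | ⟨a, h1, h2, rfl⟩)
      · exact Or.inr ⟨_, by omega, by omega, rfl⟩
      · by_cases h : a = i
        · left; rw [h]
        · exact Or.inr ⟨a, by omega, by omega, rfl⟩
    · rintro (rfl | ⟨a, h1, h2, rfl⟩)
      · exact Or.inr ⟨_, by omega, by omega, rfl⟩
      · by_cases h : a = i + t - 1
        · left; rw [h]
        · exact Or.inr ⟨a, by omega, by omega, rfl⟩
  unfold WP
  rw [hs]
  simp [n2]
  intro _
  simpa using n1

theorem wp_la (he : CyclicPropOrd M t e) (ht : 3 ≤ t) (hn : 6 * t - 10 ≤ n) (i x : ℤ)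
    (h1 : WP M t e i x) (h2 : WP M t e (i + 1) x) : False := by
  have hi := he.1.1
  have hd := dual_prop he
  -- normalise x
  obtain ⟨x', hx', hxa, hxb⟩ : ∃ x' : ℤ, e (x' : ZMod n) = e (x : ZMod n) ∧ i ≤ x' ∧ x' < i + n := by
    have : NeZero n := ⟨by omega⟩
    have hlt := ZMod.val_lt ((x : ZMod n) - (i : ZMod n))
    refine ⟨i + ((x : ZMod n) - (i : ZMod n)).val, ?_, by omega, by omega⟩
    congr 1
    push_cast; rw [ZMod.natCast_zmod_val]; ring
  have h1' : WP M t e i x' := by unfold WP; rw [hx']; exact h1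
  have h2' : WP M t e (i + 1) x' := by unfold WP; rw [hx']; exact h2
  clear h1 h2 hx' x
  have hxc : i + t - 2 < x' := by
    by_contra hc
    exact h1'.2 ((mem_seg e ht _ _).2 ⟨x', by omega, by omega, rfl⟩)
  have hxd : i + t - 1 < x' := by
    by_contra hc
    exact h2'.2 ((mem_seg e ht _ _).2 ⟨x', by omega, by omega, rfl⟩)
  have ne : insert (e (x' : ZMod n)) (seg e i (t - 1)) ≠
      insert (e (x' : ZMod n)) (seg e (i + 1) (t - 1)) := by
    intro h
    have : e (i : ZMod n) ∈ insert (e (x' : ZMod n)) (seg e (i + 1) (t - 1)) := by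
      rw [← h]
      exact Set.mem_insert_of_mem _ ((mem_seg e ht _ _).2 ⟨i, by omega, by omega, rfl⟩)
    rcases this with h | h
    · have := e_inj hi h (by omega) (by omega)
      omega
    · obtain ⟨b, b3, b4, hab⟩ := (mem_seg e ht _ _).1 h
      have := e_inj hi hab (by omega) (by omega)
      omega
  obtain ⟨K, hK, hKC⟩ := h1'.1.elimination h2'.1 ne (e (x' : ZMod n))
  have hxK : e (x' : ZMod n) ∉ K := fun h => (hK h).2 rfl
  have hKm : ∀ z ∈ K, ∃ a : ℤ, i ≤ a ∧ a ≤ i + t - 1 ∧ z = e (a : ZMod n) := by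
    intro z hz
    have hz' := hK hz
    rcases hz'.1 with (h | h) | (h | h)
    · exact absurd h hz'.2
    · obtain ⟨a, _, _, h⟩ := (mem_seg e ht _ _).1 h
      exact ⟨a, by omega, by omega, h⟩
    · exact absurd h hz'.2
    · obtain ⟨a, _, _, h⟩ := (mem_seg e ht _ _).1 h
      exact ⟨a, by omega, by omega, h⟩
  have hiK : e (i : ZMod n) ∈ K := by
    by_contra hc
    apply hxK
    rw [hKC.eq_of_subset_isCircuit h2'.1 ?_]
    · exact Set.mem_insert _ _
    · intro z hz
      obtain ⟨a, a1, a2, rfl⟩ := hKm z hz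
      refine Set.mem_insert_of_mem _ ((mem_seg e ht _ _).2 ⟨a, ?_, by omega, rfl⟩)
      have : a ≠ i := by rintro rfl; exact hc hz
      omega
  have htK : e ((i + t - 1 : ℤ) : ZMod n) ∈ K := by
    by_contra hc
    apply hxK
    rw [hKC.eq_of_subset_isCircuit h1'.1 ?_]
    · exact Set.mem_insert _ _
    · intro z hz
      obtain ⟨a, a1, a2, rfl⟩ := hKm z hz
      refine Set.mem_insert_of_mem _ ((mem_seg e ht _ _).2 ⟨a, by omega, ?_, rfl⟩)
      have : a ≠ i + t - 1 := by rintro rfl; exact hc hz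
      omega
  have d1 : M = M✶✶ := by simp
  obtain ⟨y, hy, y1, y2⟩ := wp_ex hd ht hn (i + t - 1)
  obtain ⟨z, hz, hzC, hzD⟩ := orth hKC hy.1 htK
    (Set.mem_insert_of_mem _ ((mem_seg e ht _ _).2 ⟨_, by omega, by omega, rfl⟩))
  obtain ⟨a, a1, a2, rfl⟩ := hKm z hzC
  have a3 : a ≠ i + t - 1 := by rintro rfl; exact hz rfl
  have hya : WP M✶ t e (i + t - 1) a := by
    rcases hzD with h | h
    · unfold WP; rw [h]; exact hy
    · obtain ⟨b, b3, b4, hab⟩ := (mem_seg e ht _ _).1 h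
      have := e_inj hi hab (by omega) (by omega)
      omega
  have u1 := wp_oL hi ht _ i a x' hya (by rw [← d1]; exact h1') (by omega) (by omega) (by omega)
    (by omega) (by omega) (by omega)
  obtain ⟨y', hy', y1', y2'⟩ := wp_ex hd ht hn (i - t + 2)
  obtain ⟨z, hz', hzC', hzD'⟩ := orth hKC hy'.1 hiK
    (Set.mem_insert_of_mem _ ((mem_seg e ht _ _).2 ⟨_, by omega, by omega, rfl⟩))
  obtain ⟨a', a1', a2', rfl⟩ := hKm z hzC'
  have a3' : a' ≠ i := by rintro rfl; exact hz' rfl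
  have hya' : WP M✶ t e (i - t + 2) a' := by
    rcases hzD' with h | h
    · unfold WP; rw [h]; exact hy'
    · obtain ⟨b, b3, b4, hab⟩ := (mem_seg e ht _ _).1 h
      have := e_inj hi hab (by omega) (by omega)
      omega
  have u2 := wp_oR hi ht _ (i + 1) a' (x' - n) hya'
    (by rw [← d1, wp_per]; simpa using h2') (by omega) (by omega) (by omega)
    (by omega) (by omega) (by omega)
  omega

theorem half (he : CyclicPropOrd M t e) (ht : 3 ≤ t) (hn : 6 * t - 10 ≤ n) :
    Half t n (WP M t e) (WP M✶ t e) where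
  ex := wp_ex he ht hn
  per := wp_per
  per1 := wp_per1
  la i x h1 h2 := wp_la he ht hn i x h1 h2
  sw := wp_sw he.1.1 ht hn
  oR := wp_oR he.1.1 ht
  oL := wp_oL he.1.1 ht
  o2 := wp_o2 he.1.1 ht hn

theorem uniq (he : CyclicPropOrd M t e) (ht : 3 ≤ t) (hn : 6 * t - 10 ≤ n) (i : ℤ) :
    ∃! C, Cct M C ∧ C.ncard = t ∧ seg e i (t - 1) ⊆ C := by
  have h := half he ht hn
  have h' := half (dual_prop he) ht hn
  rw [Matroid.dual_dual] at h'
  have hT : (3 : ℤ) ≤ t := by omega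
  have hN : 6 * (t : ℤ) - 10 ≤ n := by omega
  obtain ⟨C, hC⟩ := (he.2 i).1
  refine ⟨C, hC, ?_⟩
  intro C' hC'
  obtain ⟨x, rfl, hx, x1, x2⟩ := of_cct he.1 ht (by omega) i C hC.1 hC.2.1 hC.2.2
  obtain ⟨x', rfl, hx', x1', x2'⟩ := of_cct he.1 ht (by omega) i C' hC'.1 hC'.2.1 hC'.2.2
  have sw' : WP M t e i (i + n - 1) → WP M t e (i - 1) (i - 1 + t - 1) := by
    intro hh
    rw [h.sw, h.per]
    convert hh using 1 <;> ring
  have al := alt hT hN h h' i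
  rcases main hT hN h h' i x hx x1 x2 with c | c <;>
    rcases main hT hN h h' i x' hx' x1' x2' with c' | c'
  · rw [c, c']
  · subst c c'
    exact absurd (sw' hx') (al.1 hx)
  · subst c c'
    exact absurd (sw' hx) (al.1 hx')
  · rw [c, c']

theorem final (M : Matroid α) (t n : ℕ) (ht : 3 ≤ t) (hn : 6 * t - 10 ≤ n)
    (e : ZMod n → α) (he : CyclicPropOrd M t e) :
    Even n ∧ ∀ i : ℤ,
      (∃! C, Cct M C ∧ C.ncard = t ∧ seg e i (t - 1) ⊆ C) ∧
      (∃! C, Cct M✶ C ∧ C.ncard = t ∧ seg e i (t - 1) ⊆ C) := by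
  have h := half he ht hn
  have h' := half (dual_prop he) ht hn
  rw [Matroid.dual_dual] at h'
  exact ⟨evn (T := t) (by omega) (by omega) h h',
    fun i => ⟨uniq he ht hn i, uniq (dual_prop he) ht hn i⟩⟩

end

/-- If `M` has a cyclic `(t-1,t)`-ordering with `t ≥ 3` and `n ≥ 6t-10`,
then `n` is even and every set `X_i` of `t-1` consecutive elements is contained in a
unique `t`-element circuit and a unique `t`-element cocircuit. -/
theorem statement_0 (M : Matroid α) (t n : ℕ) (ht : 3 ≤ t) (hn : 6 * t - 10 ≤ n)
    (e : ZMod n → α) (he : CyclicPropOrd M t e) :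
    Even n ∧ ∀ i : ℤ,
      (∃! C, Cct M C ∧ C.ncard = t ∧ seg e i (t - 1) ⊆ C) ∧
      (∃! C, Cct M✶ C ∧ C.ncard = t ∧ seg e i (t - 1) ⊆ C) := by
  exact final M t n ht hn e he

end CyclicArr
end

section
/- Let t ≥ 3 be an odd integer and let M be a matroid admitting a cyclic (t−1,t)-ordering e_1, e_2, …, e_n with n ≥ 6t−10. Then: (i) for every index i, the set σ[i, i+t−1] = {e_i, e_{i+1}, …, e_{i+t−1}} is either a t-element circuit of M or a t-element cocircuit of M, but not both; (ii) for every index i, σ[i, i+t−1] is a t-element circuit if and only if σ[i+1, i+t] is a t-element cocircuit; and (iii) for all indices i and j with j ≡ i (mod 2), if σ[i, i+t−1] is a t-element circuit then σ[j, j+t−1] is a t-element circuit. -/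
open Set

namespace CyclicArr

variable {α : Type*}

/-- `x` lies in the window of length `s` starting at `i`, modulo `n`. -/
def R (n s x i : ℤ) : Prop := (x - i) % n < s

theorem emod_cases (n v : ℤ) (h1 : -n ≤ v) (h2 : v < 2 * n) (hn : 0 < n) :
    (v < 0 ∧ v % n = v + n) ∨ (0 ≤ v ∧ v < n ∧ v % n = v) ∨ (n ≤ v ∧ v % n = v - n) := by
  rcases lt_or_ge v 0 with h | h
  · left
    refine ⟨h, ?_⟩
    rw [← Int.add_emod_right]
    exact Int.emod_eq_of_lt (by omega) (by omega)
  · rcases lt_or_ge v n with h' | h'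
    · right; left
      exact ⟨h, h', Int.emod_eq_of_lt h h'⟩
    · right; right
      refine ⟨h', ?_⟩
      rw [← Int.sub_emod_right]
      exact Int.emod_eq_of_lt (by omega) (by omega)

theorem refl_emod (n w y : ℤ) (hn : 0 < n) (hw : w ≤ n) (h : y % n < w) :
    (w - 1 - y) % n < w := by
  have h0 := Int.emod_nonneg y hn.ne'
  have : (w - 1 - y) % n = (w - 1 - y % n) % n := by
    rw [Int.sub_emod, Int.sub_emod (w-1) (y % n), Int.emod_emod]
  rw [this, Int.emod_eq_of_lt (by omega) (by omega)]
  omega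

theorem refl_emod_iff (n w y : ℤ) (hn : 0 < n) (hw : w ≤ n) :
    (w - 1 - y) % n < w ↔ y % n < w := by
  refine ⟨fun h => ?_, refl_emod n w y hn hw⟩
  have := refl_emod n w _ hn hw h
  rwa [show w - 1 - (w - 1 - y) = y by ring] at this

theorem R_iff (n s x i : ℤ) (hn : 0 < n) (hs : s ≤ n) (hx : 0 ≤ x) (hx' : x < n)
    (hi : -n ≤ i) (hi' : i ≤ n) :
    R n s x i ↔ (i ≤ x ∧ x < i + s) ∨ (i ≤ x - n ∧ x - n < i + s) ∨
      (i ≤ x + n ∧ x + n < i + s) := by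
  unfold R
  rcases emod_cases n (x - i) (by omega) (by omega) hn with h | h | h <;> omega

structure Sys (n s : ℤ) (c d : ℤ → ℤ) : Prop where
  nc : ∀ i, ¬ R n s (c i) i
  nd : ∀ i, ¬ R n s (d i) i
  a1 : ∀ i j, (s ≤ j - i ∧ j - i ≤ n - s) ∨ (s ≤ i - j ∧ i - j ≤ n - s) →
    (R n s (c i) j ↔ R n s (d j) i)
  a3 : ∀ i j, (j - i = s - 1 ∨ i - j = s - 1) →
    R n s (c i) j ∨ R n s (d j) i ∨ (c i - d j) % n = 0

theorem Sys.swap {n s : ℤ} {c d : ℤ → ℤ} (h : Sys n s c d) : Sys n s d c where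
  nc := h.nd
  nd := h.nc
  a1 i j hij := (h.a1 j i (by omega)).symm
  a3 i j hij := by
    rcases h.a3 j i (by omega) with h | h | h
    · exact Or.inr (Or.inl h)
    · exact Or.inl h
    · right; right
      rw [show d i - c j = -(c j - d i) by ring]
      exact Int.emod_eq_zero_of_dvd ((Int.dvd_of_emod_eq_zero h).neg_right)

theorem Sys.trans {n s : ℤ} {c d : ℤ → ℤ} (h : Sys n s c d) (a : ℤ) :
    Sys n s (fun m => c (m + a) - a) (fun m => d (m + a) - a) := by
  have key : ∀ x j, R n s (x - a) j ↔ R n s x (j + a) := by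
    intro x j; unfold R; rw [show x - a - j = x - (j + a) by ring]
  refine ⟨?_, ?_, ?_, ?_⟩
  · intro i; rw [key]; exact h.nc _
  · intro i; rw [key]; exact h.nd _
  · intro i j hij; rw [key, key]; exact h.a1 _ _ (by omega)
  · intro i j hij; rw [key, key, sub_sub_sub_cancel_right]; exact h.a3 _ _ (by omega)

theorem Sys.reflect {n s : ℤ} {c d : ℤ → ℤ} (hn : 0 < n) (hs : s ≤ n) (h : Sys n s c d) :
    Sys n s (fun m => s - 1 - c (-m)) (fun m => s - 1 - d (-m)) := by
  have key : ∀ x j, R n s (s - 1 - x) j ↔ R n s x (-j) := by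
    intro x j; unfold R
    rw [show s - 1 - x - j = s - 1 - (x - -j) by ring, refl_emod_iff n s _ hn hs]
  refine ⟨?_, ?_, ?_, ?_⟩
  · intro i; rw [key]; exact h.nc _
  · intro i; rw [key]; exact h.nd _
  · intro i j hij; rw [key, key]; exact h.a1 _ _ (by omega)
  · intro i j hij; rw [key, key]
    rcases h.a3 (-i) (-j) (by omega) with h | h | h
    · exact Or.inl h
    · exact Or.inr (Or.inl h)
    · right; right
      rw [show s - 1 - c (-i) - (s - 1 - d (-j)) = -(c (-i) - d (-j)) by ring]
      exact Int.emod_eq_zero_of_dvd ((Int.dvd_of_emod_eq_zero h).neg_right)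

theorem R_emod (n s x j : ℤ) : R n s (x % n) j ↔ R n s x j := by
  unfold R; rw [Int.emod_sub_emod]

theorem Sys.norm {n s : ℤ} {c d : ℤ → ℤ} (h : Sys n s c d) :
    Sys n s (fun m => c m % n) (fun m => d m % n) := by
  refine ⟨?_, ?_, ?_, ?_⟩
  · intro i; rw [R_emod]; exact h.nc _
  · intro i; rw [R_emod]; exact h.nd _
  · intro i j hij; rw [R_emod, R_emod]; exact h.a1 _ _ (by omega)
  · intro i j hij; rw [R_emod, R_emod]
    simp only [Int.emod_sub_emod, Int.sub_emod_emod]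
    exact h.a3 _ _ hij

/-- linear form of window membership -/
def L (n s x i : ℤ) : Prop := (i ≤ x ∧ x < i + s) ∨ (i ≤ x - n ∧ x - n < i + s) ∨
      (i ≤ x + n ∧ x + n < i + s)

structure LSys (n s : ℤ) (c d : ℤ → ℤ) : Prop where
  bc : ∀ i, 0 ≤ c i ∧ c i < n
  bd : ∀ i, 0 ≤ d i ∧ d i < n
  nc : ∀ i, -n ≤ i → i ≤ n → ¬ L n s (c i) i
  nd : ∀ i, -n ≤ i → i ≤ n → ¬ L n s (d i) i
  a1 : ∀ i j, -n ≤ i → i ≤ n → -n ≤ j → j ≤ n →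
    (s ≤ j - i ∧ j - i ≤ n - s) ∨ (s ≤ i - j ∧ i - j ≤ n - s) →
    (L n s (c i) j ↔ L n s (d j) i)
  a3 : ∀ i j, -n ≤ i → i ≤ n → -n ≤ j → j ≤ n → (j - i = s - 1 ∨ i - j = s - 1) →
    L n s (c i) j ∨ L n s (d j) i ∨ c i = d j

theorem Sys.toL {n s : ℤ} {c d : ℤ → ℤ} (hn : 0 < n) (hs : s ≤ n) (h : Sys n s c d) :
    LSys n s (fun m => c m % n) (fun m => d m % n) := by
  have b : ∀ x : ℤ, 0 ≤ x % n ∧ x % n < n :=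
    fun x => ⟨Int.emod_nonneg _ hn.ne', Int.emod_lt_of_pos _ hn⟩
  have r : ∀ x i, -n ≤ i → i ≤ n → (L n s (x % n) i ↔ R n s x i) := fun x i h1 h2 => by
    rw [← R_emod]
    exact (R_iff n s (x % n) i hn hs (b x).1 (b x).2 h1 h2).symm
  refine ⟨fun i => b _, fun i => b _, ?_, ?_, ?_, ?_⟩
  · intro i h1 h2; rw [r _ _ h1 h2]; exact h.nc i
  · intro i h1 h2; rw [r _ _ h1 h2]; exact h.nd i
  · intro i j h1 h2 h3 h4 hij; rw [r _ _ h1 h2, r _ _ h3 h4]; exact h.a1 i j hij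
  · intro i j h1 h2 h3 h4 hij; rw [r _ _ h1 h2, r _ _ h3 h4]
    rcases h.a3 i j hij with h | h | h
    · exact Or.inl h
    · exact Or.inr (Or.inl h)
    · exact Or.inr (Or.inr (Int.emod_eq_emod_iff_emod_sub_eq_zero.2 h))

theorem LSys.far1 {n s : ℤ} {c d : ℤ → ℤ} (hs : 2 ≤ s) (hn : 6 * s - 4 ≤ n) (h : LSys n s c d)
    (hk : 2 * s - 1 ≤ c 0) (hk' : c 0 ≤ n - s) (ha : L n s (d (s - 1)) 0) : False := by
  have bc := h.bc
  have bd := h.bd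
  have b1 := bc (-1)
  have b2 := bd (s - 1)
  have n2 := h.nd (s - 1) (by omega) (by omega)
  have e1 : L n s (c (-1)) (s - 1) := by
    rw [h.a1 (-1) (s-1) (by omega) (by omega) (by omega) (by omega) (by omega)]
    unfold L at *; omega
  have e2 : ∀ j, c 0 - s + 1 ≤ j → j ≤ c 0 → 2 * s - 1 ≤ j → j ≤ n - 1 - s → d j = s - 1 := by
    intro j h1 h2 h3 h4
    have u := h.a1 0 j (by omega) (by omega) (by omega) (by omega) (by omega)
    have v := h.a1 (-1) j (by omega) (by omega) (by omega) (by omega) (by omega)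
    have := bd j
    unfold L at *; omega
  rcases le_or_gt (4 * s - 3) (c 0) with hc | hc
  · generalize hK : c 0 = k at *
    have f1 := e2 (k - s + 1) (by omega) (by omega) (by omega) (by omega)
    have f2 := h.a3 (k - 2 * s + 2) (k - s + 1) (by omega) (by omega) (by omega) (by omega) (by omega)
    have f3 := h.a1 (k - 2 * s + 2) (s - 1) (by omega) (by omega) (by omega) (by omega) (by omega)
    have f4 := h.a1 (k - 2 * s + 2) (k - s + 2) (by omega) (by omega) (by omega) (by omega) (by omega)
    have f5 := h.a1 0 (k - s + 2) (by omega) (by omega) (by omega) (by omega) (by omega)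
    have f6 := h.nc (k - 2 * s + 2) (by omega) (by omega)
    have g1 := bc (k - 2 * s + 2)
    have g2 := bd (k - s + 2)
    rw [f1] at f2
    rw [hK] at f5
    generalize c (k - 2 * s + 2) = x at *
    generalize d (k - s + 2) = y at *
    generalize d (s - 1) = z at *
    clear e1 e2 b1
    have f7 : x ≠ s - 1 := by
      rintro rfl
      unfold L at *; omega
    have f8 : L n s x (k - s + 2) := by unfold L at *; omega
    have f9 := f4.1 f8
    have f10 : L n s y 0 := f5.1 (by unfold L at *; omega)
    unfold L at *; omega
  · generalize hK : c 0 = k at *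
    have f1 := e2 k (by omega) (by omega) (by omega) (by omega)
    have f2 := h.a3 (k + s - 1) k (by omega) (by omega) (by omega) (by omega) (by omega)
    have f3 := h.a1 (k + s - 1) (s - 1) (by omega) (by omega) (by omega) (by omega) (by omega)
    have f4 := h.a1 (k + s - 1) (k - 1) (by omega) (by omega) (by omega) (by omega) (by omega)
    have f5 := h.a1 0 (k - 1) (by omega) (by omega) (by omega) (by omega) (by omega)
    have f6 := h.nc (k + s - 1) (by omega) (by omega)
    have g1 := bc (k + s - 1)
    have g2 := bd (k - 1)
    rw [f1] at f2
    rw [hK] at f5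
    generalize c (k + s - 1) = x at *
    generalize d (k - 1) = y at *
    generalize d (s - 1) = z at *
    clear e1 e2 b1
    have f7 : x ≠ s - 1 := by
      rintro rfl
      unfold L at *; omega
    have f8 : L n s x (k - 1) := by unfold L at *; omega
    have f9 := f4.1 f8
    have f10 : L n s y 0 := f5.1 (by unfold L at *; omega)
    unfold L at *; omega

theorem LSys.far2 {n s : ℤ} {c d : ℤ → ℤ} (hs : 2 ≤ s) (hn : 6 * s - 4 ≤ n) (h : LSys n s c d)
    (hk : 2 * s - 1 ≤ c 0) (hk' : c 0 ≤ n - s) :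
    L n s (d (s - 1)) 0 ∨ L n s (d (-(s - 1))) 0 := by
  by_contra hcon
  push Not at hcon
  obtain ⟨h1, h2⟩ := hcon
  obtain ⟨m, hm1, hm2, hm3, hm4⟩ : ∃ m, m ≤ c 0 ∧ c 0 < m + s ∧ 2 * s - 1 ≤ m ∧ m + s ≤ n - s + 1 := by
    rcases le_or_gt (3 * s - 2) (c 0) with h | h
    · exact ⟨c 0 - s + 1, by omega, by omega, by omega, by omega⟩
    · exact ⟨c 0, by omega, by omega, by omega, by omega⟩
  have f1 := h.a3 0 (s - 1) (by omega) (by omega) (by omega) (by omega) (by omega)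
  have f2 := h.a3 0 (-(s - 1)) (by omega) (by omega) (by omega) (by omega) (by omega)
  have f3 := h.a1 m (s - 1) (by omega) (by omega) (by omega) (by omega) (by omega)
  have f4 := h.a1 m (-(s - 1)) (by omega) (by omega) (by omega) (by omega) (by omega)
  have g1 : d (s - 1) = c 0 := by unfold L at *; omega
  have g2 : d (-(s - 1)) = c 0 := by unfold L at *; omega
  rw [g1] at f3
  rw [g2] at f4
  have g3 := f3.2 (by unfold L at *; omega)
  have g4 := f4.2 (by unfold L at *; omega)
  have := h.bc m
  unfold L at *; omega

theorem Sys.notfar0 {n s : ℤ} {c d : ℤ → ℤ} (hs : 2 ≤ s) (hn : 6 * s - 4 ≤ n) (h : Sys n s c d) :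
    ¬ (2 * s - 1 ≤ c 0 % n ∧ c 0 % n ≤ n - s) := by
  rintro ⟨h1, h2⟩
  have hL := h.toL (by omega) (by omega)
  rcases hL.far2 hs hn h1 h2 with h3 | h3
  · exact hL.far1 hs hn h1 h2 h3
  · have hs' := (h.reflect (by omega) (by omega))
    have hL' := hs'.toL (by omega) (by omega)
    have e0 : (s - 1 - c 0) % n = s - 1 - c 0 % n + n := by
      rw [← Int.sub_emod_emod]
      rcases emod_cases n (s - 1 - c 0 % n) (by omega) (by omega) (by omega) with h | h | h <;> omega
    refine hL'.far1 hs hn ?_ ?_ ?_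
    · simp only [neg_zero]; omega
    · simp only [neg_zero]; omega
    · have b : 0 ≤ d (-(s-1)) % n ∧ d (-(s-1)) % n < n :=
        ⟨Int.emod_nonneg _ (by omega), Int.emod_lt_of_pos _ (by omega)⟩
      have e0 : (s - 1 - d (-(s-1))) % n = (s - 1 - d (-(s-1)) % n) % n := by
        rw [Int.sub_emod_emod]
      show L n s ((s - 1 - d (-(s-1))) % n) 0
      rw [e0]
      generalize d (-(s-1)) % n = z at *
      rcases emod_cases n (s - 1 - z) (by omega) (by omega) (by omega) with h | h | h <;>
      · unfold L at *; omega

theorem Sys.notfar {n s : ℤ} {c d : ℤ → ℤ} (hs : 2 ≤ s) (hn : 6 * s - 4 ≤ n) (h : Sys n s c d)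
    (i : ℤ) : ¬ (2 * s - 1 ≤ (c i - i) % n ∧ (c i - i) % n ≤ n - s) := by
  simpa using (h.trans i).notfar0 hs hn

theorem Sys.semi0 {n s : ℤ} {c d : ℤ → ℤ} (hs : 2 ≤ s) (hn : 6 * s - 4 ≤ n) (h : Sys n s c d) :
    ¬ (s + 1 ≤ c 0 % n ∧ c 0 % n ≤ 2 * s - 2) := by
  rintro ⟨h1, h2⟩
  have hL := h.toL (by omega) (by omega)
  have p1 := h.swap.notfar hs hn (s + 1)
  have p2 := h.swap.notfar hs hn (-(s - 1))
  rw [← Int.emod_sub_emod] at p1 p2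
  have f1 := hL.a1 0 (s + 1) (by omega) (by omega) (by omega) (by omega) (by omega)
  have f2 := hL.a3 0 (-(s - 1)) (by omega) (by omega) (by omega) (by omega) (by omega)
  have f3 := hL.a1 1 (-(s - 1)) (by omega) (by omega) (by omega) (by omega) (by omega)
  have f4 := hL.a1 1 (s + 1) (by omega) (by omega) (by omega) (by omega) (by omega)
  have f5 := hL.nd (-(s - 1)) (by omega) (by omega)
  have b1 := hL.bc 1
  have b2 := hL.bd (s + 1)
  have b3 := hL.bd (-(s - 1))
  beta_reduce at f1 f2 f3 f4 f5 b1 b2 b3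
  generalize c 0 % n = k at *
  generalize c 1 % n = x at *
  generalize d (s + 1) % n = y at *
  generalize d (-(s - 1)) % n = z at *
  have q1 := emod_cases n (y - (s + 1)) (by omega) (by omega) (by omega)
  have q2 := emod_cases n (z - (-(s - 1))) (by omega) (by omega) (by omega)
  generalize (y - (s + 1)) % n = y' at *
  generalize (z - (-(s - 1))) % n = z' at *
  have g1 : L n s y 0 := f1.1 (by unfold L; omega)
  have g2 : 1 ≤ z ∧ z < s := by unfold L at *; omega
  have g3 : L n s x (-(s - 1)) := f3.2 (by unfold L; omega)
  have g4 : ¬ L n s y 1 := fun hy => by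
    have := f4.2 hy
    unfold L at *; omega
  unfold L at *; omega

theorem Sys.near0 {n s : ℤ} {c d : ℤ → ℤ} (hs : 2 ≤ s) (hn : 6 * s - 4 ≤ n) (h : Sys n s c d) :
    c 0 % n = s ∨ c 0 % n = n - 1 := by
  have p1 := h.notfar0 hs hn
  have p2 := h.semi0 hs hn
  have p3 := (h.reflect (by omega) (by omega)).semi0 hs hn
  have p4 := h.nc 0
  have b : 0 ≤ c 0 % n ∧ c 0 % n < n :=
        ⟨Int.emod_nonneg _ (by omega), Int.emod_lt_of_pos _ (by omega)⟩
  simp only [neg_zero] at p3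
  rw [← Int.sub_emod_emod] at p3
  unfold R at p4
  rw [sub_zero] at p4
  generalize c 0 % n = z at *
  rcases emod_cases n (s - 1 - z) (by omega) (by omega) (by omega) with h | h | h <;> omega

theorem Sys.near {n s : ℤ} {c d : ℤ → ℤ} (hs : 2 ≤ s) (hn : 6 * s - 4 ≤ n) (h : Sys n s c d)
    (i : ℤ) : (c i - i) % n = s ∨ (c i - i) % n = n - 1 := by
  simpa using (h.trans i).near0 hs hn

theorem cong_iff {n : ℕ} (x y : ℤ) : ((x : ZMod n) = (y : ZMod n)) ↔ (x - y) % (n : ℤ) = 0 := by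
  rw [ZMod.intCast_eq_intCast_iff, Int.ModEq, Int.emod_eq_emod_iff_emod_sub_eq_zero]

theorem mem_seg_s1 {n : ℕ} {e : ZMod n → α} (hinj : Function.Injective e) (hn : 0 < n) (x i : ℤ)
    (s : ℕ) : e (x : ZMod n) ∈ seg e i s ↔ R n s x i := by
  have hn' : (0 : ℤ) < n := by exact_mod_cast hn
  unfold seg R
  constructor
  · rintro ⟨k, hk, hx⟩
    have h1 := hinj hx
    rw [cong_iff, ← Int.dvd_iff_emod_eq_zero] at h1
    have h2 : (x - i) % (n : ℤ) = k % (n : ℤ) := by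
      rw [Int.emod_eq_emod_iff_emod_sub_eq_zero, ← Int.dvd_iff_emod_eq_zero]
      rw [← Int.dvd_neg]
      convert h1 using 1
      ring
    have hk' : k < s := hk
    have h3 : (k : ℤ) % n ≤ k := by exact_mod_cast Nat.mod_le k n
    omega
  · intro h
    have h0 := Int.emod_nonneg (x - i) hn'.ne'
    refine ⟨((x - i) % (n : ℤ)).toNat, ?_, ?_⟩
    · show _ < s
      omega
    · show e _ = e _
      congr 1
      rw [cong_iff, Int.toNat_of_nonneg h0, ← Int.dvd_iff_emod_eq_zero]
      have := Int.dvd_self_sub_emod (x := x - i) (m := n)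
      rw [← Int.dvd_neg]
      convert this using 1
      ring

theorem range_rep {n : ℕ} {e : ZMod n → α} {x : α} (hx : x ∈ Set.range e) :
    ∃ z : ℤ, e (z : ZMod n) = x := by
  obtain ⟨w, rfl⟩ := hx
  obtain ⟨z, rfl⟩ := ZMod.intCast_surjective w
  exact ⟨z, rfl⟩

theorem seg_range {n : ℕ} (e : ZMod n → α) (i : ℤ) (s : ℕ) : seg e i s ⊆ Set.range e := by
  rintro _ ⟨k, _, rfl⟩
  exact ⟨_, rfl⟩

theorem set_ext {n : ℕ} {e : ZMod n → α} {A B : Set α} (hA : A ⊆ Set.range e)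
    (hB : B ⊆ Set.range e) (h : ∀ z : ℤ, e (z : ZMod n) ∈ A ↔ e (z : ZMod n) ∈ B) : A = B := by
  ext x
  constructor
  · intro hx
    obtain ⟨z, rfl⟩ := range_rep (hA hx)
    exact (h z).1 hx
  · intro hx
    obtain ⟨z, rfl⟩ := range_rep (hB hx)
    exact (h z).2 hx

theorem seg_ncard {n : ℕ} {e : ZMod n → α} (hinj : Function.Injective e)
    (i : ℤ) (s : ℕ) (hs : s ≤ n) : (seg e i s).ncard = s := by
  unfold seg
  rw [Set.ncard_image_of_injOn]
  · rw [Set.ncard_eq_toFinset_card']; simp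
  · intro a ha b hb hab
    have ha' : a < s := ha
    have hb' : b < s := hb
    have h1 := hinj hab
    rw [cong_iff] at h1
    rw [show i + (a : ℤ) - (i + b) = a - b by ring] at h1
    rw [← Int.emod_eq_emod_iff_emod_sub_eq_zero] at h1
    rw [Int.emod_eq_of_lt (by omega) (by omega), Int.emod_eq_of_lt (by omega) (by omega)] at h1
    omega

theorem exists_rep {n : ℕ} {e : ZMod n → α} (hinj : Function.Injective e) (hn : 0 < n)
    (C : Set α) (hr : C ⊆ Set.range e) (i : ℤ) (s : ℕ) (hs : s ≤ n)
    (hC : C.ncard = s + 1) (hsub : seg e i s ⊆ C) :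
    ∃ c : ℤ, ¬ R n s c i ∧ C = insert (e (c : ZMod n)) (seg e i s) := by
  have hfin : C.Finite := Set.finite_of_ncard_ne_zero (by omega)
  have hcard := seg_ncard hinj i s hs
  obtain ⟨x, hxC, hx⟩ := Set.exists_mem_notMem_of_ncard_lt_ncard
    (show (seg e i s).ncard < C.ncard by omega) (hfin.subset hsub)
  obtain ⟨z, rfl⟩ := range_rep (hr hxC)
  refine ⟨z, fun h => hx ((mem_seg_s1 hinj hn z i s).2 h), ?_⟩
  symm
  apply Set.eq_of_subset_of_ncard_le (Set.insert_subset hxC hsub) _ hfin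
  rw [Set.ncard_insert_of_notMem hx (hfin.subset hsub)]
  omega

theorem R_cong {n s z w i : ℤ} (h : (z - w) % n = 0) : R n s z i ↔ R n s w i := by
  rw [← Int.emod_eq_emod_iff_emod_sub_eq_zero] at h
  rw [← R_emod, h, R_emod]

theorem R_disj {n s z i j : ℤ} (hn : 0 < n)
    (hij : (s ≤ j - i ∧ j - i ≤ n - s) ∨ (s ≤ i - j ∧ i - j ≤ n - s))
    (h1 : R n s z i) (h2 : R n s z j) : False := by
  unfold R at *
  have b := Int.emod_nonneg (z - i) hn.ne'
  have e : (z - j) % n = ((z - i) % n - (j - i)) % n := by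
    rw [Int.emod_sub_emod]; congr 1; ring
  have b' := Int.emod_lt_of_pos (z - i) hn
  rw [e] at h2
  rcases emod_cases n ((z - i) % n - (j - i)) (by omega) (by omega) hn with h | h | h <;> omega

theorem R_single {n s z i j : ℤ} (hs : 0 < s) (hn : 2 * s ≤ n) (hij : j - i = s - 1) :
    R n s z i ∧ R n s z j ↔ (z - j) % n = 0 := by
  unfold R at *
  have b := Int.emod_nonneg (z - i) (show n ≠ 0 by omega)
  have e : (z - j) % n = ((z - i) % n - (j - i)) % n := by
    rw [Int.emod_sub_emod]; congr 1; ring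
  have b' := Int.emod_lt_of_pos (z - i) (show 0 < n by omega)
  rw [e]
  rcases emod_cases n ((z - i) % n - (j - i)) (by omega) (by omega) (by omega) with h | h | h <;> omega

theorem orth_s1 {n : ℕ} {M : Matroid α} {e : ZMod n → α} (hr : Set.range e = M.E) {C D : Set α}
    (hC : Cct M C) (hD : Cct M✶ D) (y : ℤ)
    (h : ∀ z : ℤ, e (z : ZMod n) ∈ C ∧ e (z : ZMod n) ∈ D ↔ (z - y) % (n : ℤ) = 0)
    (hinj : Function.Injective e) : False := by
  have hC' : M.IsCircuit C := hC
  have hD' : M.IsCocircuit D := hD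
  apply hC'.inter_isCocircuit_ne_singleton hD' (e := e (y : ZMod n))
  apply set_ext (e := e)
  · rw [hr]; exact Set.inter_subset_left.trans hC'.subset_ground
  · rintro _ rfl; exact ⟨_, rfl⟩
  · intro z
    rw [Set.mem_inter_iff, h, Set.mem_singleton_iff, hinj.eq_iff, cong_iff]

theorem toSys {n s : ℕ} {M : Matroid α} {e : ZMod n → α} (hr : Set.range e = M.E)
    (hinj : Function.Injective e) (hs : 2 ≤ s) (hn : 6 * s ≤ n + 4) (c d : ℤ → ℤ)
    (hc : ∀ i, ¬ R n s (c i) i) (hd : ∀ i, ¬ R n s (d i) i)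
    (hC : ∀ i, Cct M (insert (e (c i : ZMod n)) (seg e i s)))
    (hD : ∀ i, Cct M✶ (insert (e (d i : ZMod n)) (seg e i s))) : Sys n s c d := by
  have hn0 : 0 < n := by omega
  have key : ∀ i j y, ¬ ∀ z : ℤ, (((z - c i) % n = 0 ∨ R n s z i) ∧
      ((z - d j) % n = 0 ∨ R n s z j)) ↔ (z - y) % n = 0 := by
    intro i j y h
    refine orth_s1 hr (hC i) (hD j) y ?_ hinj
    intro z
    rw [← h z]
    simp only [Set.mem_insert_iff, mem_seg_s1 hinj hn0, hinj.eq_iff, cong_iff]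
  refine ⟨hc, hd, ?_, ?_⟩
  · intro i j hij
    have dj : ∀ z, R n s z i → R n s z j → False := fun z => R_disj (by omega) hij
    constructor
    · intro h1
      by_contra h2
      apply key i j (c i)
      intro z
      constructor
      · rintro ⟨h | h, h' | h'⟩
        · exact h
        · exact h
        · exact absurd ((R_cong h').1 h) h2
        · exact (dj z h h').elim
      · intro h
        exact ⟨Or.inl h, Or.inr ((R_cong h).2 h1)⟩
    · intro h1
      by_contra h2
      apply key i j (d j)
      intro z
      constructor
      · rintro ⟨h | h, h' | h'⟩
        · exact h'
        · exact absurd ((R_cong h).1 h') h2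
        · exact h'
        · exact (dj z h h').elim
      · intro h
        exact ⟨Or.inr ((R_cong h).2 h1), Or.inl h⟩
  · intro i j hij
    obtain ⟨y, hy⟩ : ∃ y, ∀ z, R n s z i ∧ R n s z j ↔ (z - y) % (n : ℤ) = 0 := by
      rcases hij with hij | hij
      · exact ⟨j, fun z => R_single (by omega) (by omega) hij⟩
      · exact ⟨i, fun z => by rw [and_comm]; exact R_single (by omega) (by omega) hij⟩
    by_contra hcon
    push Not at hcon
    obtain ⟨h1, h2, h3⟩ := hcon
    apply key i j y
    intro z
    rw [← hy]
    constructor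
    · rintro ⟨h | h, h' | h'⟩
      · exfalso; apply h3
        rw [← Int.emod_eq_emod_iff_emod_sub_eq_zero] at h h' ⊢
        rw [← h, h']
      · exact absurd ((R_cong h).1 h') h1
      · exact absurd ((R_cong h').1 h) h2
      · exact ⟨h, h'⟩
    · rintro ⟨h, h'⟩
      exact ⟨Or.inr h, Or.inr h'⟩

theorem insert_eq {n s : ℕ} {e : ZMod n → α}
    (hinj : Function.Injective e) (hn : 2 * s + 4 ≤ n) (c i : ℤ)
    (hc : (c - i) % n = s ∨ (c - i) % n = n - 1) :
    insert (e (c : ZMod n)) (seg e i s) = seg e (i - 1) (s + 1) ∨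
    insert (e (c : ZMod n)) (seg e i s) = seg e i (s + 1) := by
  have hn0 : 0 < n := by omega
  have hsub : insert (e (c : ZMod n)) (seg e i s) ⊆ Set.range e :=
    Set.insert_subset ⟨_, rfl⟩ (seg_range _ _ _)
  have q : ∀ z, (z - c) % (n : ℤ) = 0 ↔ (z - i) % (n : ℤ) = (c - i) % (n : ℤ) := by
    intro z
    rw [Int.emod_eq_emod_iff_emod_sub_eq_zero, sub_sub_sub_cancel_right]
  rcases hc with hc | hc
  · right
    apply set_ext hsub (seg_range _ _ _)
    intro z
    simp only [Set.mem_insert_iff, mem_seg_s1 hinj hn0, hinj.eq_iff, cong_iff, q, R]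
    push_cast
    omega
  · left
    apply set_ext hsub (seg_range _ _ _)
    intro z
    simp only [Set.mem_insert_iff, mem_seg_s1 hinj hn0, hinj.eq_iff, cong_iff, q, R]
    have e1 : (z - (i - 1)) % (n : ℤ) = ((z - i) % n + 1) % n := by
      rw [Int.emod_add_emod]; congr 1; ring
    have b := Int.emod_nonneg (z - i) (show (n : ℤ) ≠ 0 by omega)
    have b' := Int.emod_lt_of_pos (z - i) (show 0 < (n : ℤ) by omega)
    rw [e1]
    push_cast
    rcases emod_cases n ((z - i) % n + 1) (by omega) (by omega) (by omega) with h | h | h <;> omega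

theorem final_s1 (P Q : ℤ → Prop) (r : ℕ) (hP : ∀ i, P (i - 1) ∨ P i) (hQ : ∀ i, Q (i - 1) ∨ Q i)
    (h1 : ∀ i, P i → ¬ Q (i + 2 * r)) (h2 : ∀ i, Q i → ¬ P (i + 2 * r)) :
    (∀ i, Xor' (P i) (Q i)) ∧ (∀ i, P i ↔ Q (i + 1)) ∧
    (∀ i j : ℤ, j % 2 = i % 2 → P i → P j) := by
  have p1 : ∀ i, P (i + 1) ↔ ¬ P i := by
    intro i
    have a := hP (i + 1)
    rw [add_sub_cancel_right] at a
    refine ⟨fun h h' => ?_, fun h => a.resolve_left h⟩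
    have b := hQ (i + 1 + 2 * r)
    rw [show i + 1 + 2 * (r : ℤ) - 1 = i + 2 * r by ring] at b
    exact b.elim (h1 _ h') (h1 _ h)
  have q1 : ∀ i, Q (i + 1) ↔ ¬ Q i := by
    intro i
    have a := hQ (i + 1)
    rw [add_sub_cancel_right] at a
    refine ⟨fun h h' => ?_, fun h => a.resolve_left h⟩
    have b := hP (i + 1 + 2 * r)
    rw [show i + 1 + 2 * (r : ℤ) - 1 = i + 2 * r by ring] at b
    exact b.elim (h2 _ h') (h2 _ h)
  have p2 : ∀ (k : ℕ) i, P (i + 2 * k) ↔ P i := by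
    intro k i
    induction k with
    | zero => simp
    | succ k ih =>
      rw [← ih, show i + 2 * ((k + 1 : ℕ) : ℤ) = i + 2 * k + 1 + 1 by push_cast; ring, p1, p1]
      tauto
  have q2 : ∀ (k : ℕ) i, Q (i + 2 * k) ↔ Q i := by
    intro k i
    induction k with
    | zero => simp
    | succ k ih =>
      rw [← ih, show i + 2 * ((k + 1 : ℕ) : ℤ) = i + 2 * k + 1 + 1 by push_cast; ring, q1, q1]
      tauto
  have x : ∀ i, P i ↔ ¬ Q i := by
    intro i
    refine ⟨fun h => by rw [← q2 r]; exact h1 i h, fun h => ?_⟩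
    by_contra h'
    have := h1 _ ((p1 i).2 h')
    rw [q2, q1] at this
    exact this h
  refine ⟨fun i => ?_, fun i => by rw [q1, x], fun i j hij h => ?_⟩
  · have := x i
    unfold Xor'
    tauto
  · rcases le_total i j with hl | hl
    · obtain ⟨k, hk⟩ : ∃ k : ℕ, j = i + 2 * k := ⟨((j - i) / 2).toNat, by omega⟩
      rw [hk, p2]; exact h
    · obtain ⟨k, hk⟩ : ∃ k : ℕ, i = j + 2 * k := ⟨((i - j) / 2).toNat, by omega⟩
      rw [hk, p2] at h; exact h

/-- With `t ≥ 3` odd and `n ≥ 6t-10`: (i) each window of `t` consecutive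
elements is a circuit or a cocircuit but not both; (ii) a window is a circuit iff the
shifted window is a cocircuit; (iii) circuit windows occur at indices of a fixed parity. -/
theorem statement_1 (M : Matroid α) (t n : ℕ) (ht : 3 ≤ t) (htodd : Odd t)
    (hn : 6 * t - 10 ≤ n) (e : ZMod n → α) (he : CyclicPropOrd M t e) :
    (∀ i : ℤ, Xor' (Cct M (seg e i t)) (Cct M✶ (seg e i t))) ∧
    (∀ i : ℤ, Cct M (seg e i t) ↔ Cct M✶ (seg e (i + 1) t)) ∧
    (∀ i j : ℤ, j % 2 = i % 2 → Cct M (seg e i t) → Cct M (seg e j t)) := by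
  obtain ⟨⟨hinj, hr⟩, hp⟩ := he
  obtain ⟨r, hr2⟩ := htodd
  obtain ⟨s, rfl⟩ : ∃ s, t = s + 1 := ⟨t - 1, by omega⟩
  simp only [Nat.add_sub_cancel] at hp
  have hn0 : 0 < n := by omega
  have HC : ∀ i : ℤ, ∃ c : ℤ, ¬ R n s c i ∧ Cct M (insert (e (c : ZMod n)) (seg e i s)) := by
    intro i
    obtain ⟨⟨C, hC, hcard, hsub⟩, -⟩ := hp i
    have hC' : M.IsCircuit C := hC
    obtain ⟨c, h1, h2⟩ := exists_rep hinj hn0 C (hr ▸ hC'.subset_ground) i s (by omega) hcard hsub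
    exact ⟨c, h1, h2 ▸ hC⟩
  have HD : ∀ i : ℤ, ∃ c : ℤ, ¬ R n s c i ∧ Cct M✶ (insert (e (c : ZMod n)) (seg e i s)) := by
    intro i
    obtain ⟨-, ⟨C, hC, hcard, hsub⟩⟩ := hp i
    have hC' : M✶.IsCircuit C := hC
    obtain ⟨c, h1, h2⟩ := exists_rep hinj hn0 C (hr ▸ hC'.subset_ground) i s (by omega) hcard hsub
    exact ⟨c, h1, h2 ▸ hC⟩
  choose c hc1 hc2 using HC
  choose d hd1 hd2 using HD
  have sys := toSys hr hinj (by omega) (by omega) c d hc1 hd1 hc2 hd2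
  refine final_s1 (fun i => Cct M (seg e i (s + 1))) (fun i => Cct M✶ (seg e i (s + 1))) r ?_ ?_ ?_ ?_
  · intro i
    have h := hc2 i
    rcases insert_eq hinj (by omega) (c i) i (sys.near (by omega) (by omega) i) with h' | h' <;>
      rw [h'] at h
    · exact Or.inl h
    · exact Or.inr h
  · intro i
    have h := hd2 i
    rcases insert_eq hinj (by omega) (d i) i (sys.swap.near (by omega) (by omega) i) with h' | h' <;>
      rw [h'] at h
    · exact Or.inl h
    · exact Or.inr h
  · intro i h1 h2
    refine orth_s1 hr h1 h2 (i + 2 * r) ?_ hinj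
    intro z
    rw [mem_seg_s1 hinj hn0, mem_seg_s1 hinj hn0]
    exact R_single (by omega) (by omega) (by omega)
  · intro i h1 h2
    refine orth_s1 hr h2 h1 (i + 2 * r) ?_ hinj
    intro z
    rw [mem_seg_s1 hinj hn0, mem_seg_s1 hinj hn0, and_comm]
    exact R_single (by omega) (by omega) (by omega)

end CyclicArr
end

section
/- Let t ≥ 3 be an integer and let M be a matroid admitting a cyclic (t−1,t)-ordering e_1, e_2, …, e_n with n ≥ 4t−6. Then: (i) there is no index i for which there exist t-element circuits C and C' of M with X_i ⊆ C, X_{i+2t−4} ⊆ C', C ⊄ σ[i, i+3t−6] and C' ⊄ σ[i, i+3t−6]; and (ii) there is no index i for which there exist t-element cocircuits C* and C*' of M with X_i ⊆ C*, X_{i+2t−4} ⊆ C*', C* ⊄ σ[i, i+3t−6] and C*' ⊄ σ[i, i+3t−6]. -/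
open Set

namespace CyclicArr

variable {α : Type*}

theorem seg_eq {n : ℕ} (e : ZMod n → α) (i a : ℤ) (len : ℕ) :
    seg e (i + a) len = (fun k : ℤ => e ((i + k : ℤ) : ZMod n)) '' Set.Ico a (a + len) := by
  ext x
  simp only [seg, Set.mem_image, Set.mem_Iio, Set.mem_Ico]
  constructor
  · rintro ⟨k, hk, rfl⟩
    exact ⟨a + k, by omega, by rw [add_assoc]⟩
  · rintro ⟨k, hk, rfl⟩
    refine ⟨(k - a).toNat, by omega, ?_⟩
    have : i + a + ((k - a).toNat : ℤ) = i + k := by omega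
    rw [this]

theorem seg_inj {n : ℕ} (e : ZMod n → α) (he : Function.Injective e) (i : ℤ) (a b : ℤ)
    (ha : 0 ≤ a ∧ a < n) (hb : 0 ≤ b ∧ b < n)
    (h : e ((i + a : ℤ) : ZMod n) = e ((i + b : ℤ) : ZMod n)) : a = b := by
  have h1 := he h
  rw [ZMod.intCast_eq_intCast_iff] at h1
  have h2 : a ≡ b [ZMOD n] := Int.ModEq.add_left_cancel' i h1
  unfold Int.ModEq at h2
  rwa [Int.emod_eq_of_lt ha.1 ha.2, Int.emod_eq_of_lt hb.1 hb.2] at h2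

theorem eq_insert_of_seg {n : ℕ} (e : ZMod n → α) (he : Function.Injective e) (i a : ℤ)
    (t : ℕ) (ht : 1 ≤ t) (ha : 0 ≤ a) (hat : a + (t - 1 : ℕ) ≤ n) (C : Set α)
    (hC : C.ncard = t) (hs : seg e (i + a) (t - 1) ⊆ C) :
    ∃ c, c ∉ ((fun k : ℤ => e ((i + k : ℤ) : ZMod n)) '' Set.Ico a (a + (t - 1 : ℕ))) ∧
      C = insert c ((fun k : ℤ => e ((i + k : ℤ) : ZMod n)) '' Set.Ico a (a + (t - 1 : ℕ))) := by
  rw [seg_eq] at hs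
  have hinj : Set.InjOn (fun k : ℤ => e ((i + k : ℤ) : ZMod n)) (Set.Ico a (a + (t - 1 : ℕ))) := by
    intro x hx y hy h
    simp only [Set.mem_Ico] at hx hy
    exact seg_inj e he i x y (by omega) (by omega) h
  have hcard := Set.ncard_image_of_injOn hinj
  have h2 : (Set.Ico a (a + (t - 1 : ℕ))).ncard = t - 1 := by
    rw [Set.ncard_eq_toFinset_card']
    simp
  obtain ⟨c, hcn, hc⟩ := (Set.exists_eq_insert_iff_ncard
    ((Set.finite_Ico a (a + (t - 1 : ℕ))).image _)).2 ⟨hs, by omega⟩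
  exact ⟨c, hcn, hc.symm⟩

/-- If the circuit `insert (f p) (f '' [a, a+m))` is orthogonal to
`insert d (f '' [b, b+m))`, and the given index sets meet in exactly one index `r`, then
`d` lies in the former. -/
theorem ortho_step (f : ℤ → α) (n m a b p r : ℤ) (d : α)
    (hf : ∀ x y : ℤ, (0 ≤ x ∧ x < n) → (0 ≤ y ∧ y < n) → f x = f y → x = y)
    (ha : 0 ≤ a ∧ a + m ≤ n) (hb : 0 ≤ b ∧ b + m ≤ n) (hp : 0 ≤ p ∧ p < n)
    (hr : b ≤ r ∧ r < b + m) (hr' : (a ≤ r ∧ r < a + m) ∨ r = p)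
    (hu : ∀ k, (b ≤ k ∧ k < b + m) → ((a ≤ k ∧ k < a + m) ∨ k = p) → k = r)
    (ho : ∀ x, insert (f p) (f '' Set.Ico a (a + m)) ∩ insert d (f '' Set.Ico b (b + m)) ≠ {x}) :
    ∃ k, ((a ≤ k ∧ k < a + m) ∨ k = p) ∧ d = f k := by
  by_contra hcon
  apply ho (f r)
  ext y
  simp only [Set.mem_inter_iff, Set.mem_insert_iff, Set.mem_image, Set.mem_Ico,
    Set.mem_singleton_iff]
  constructor
  · rintro ⟨h1, h2⟩
    have h1' : ∃ k, ((a ≤ k ∧ k < a + m) ∨ k = p) ∧ y = f k := by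
      rcases h1 with h1 | ⟨k, hk, h1⟩
      · exact ⟨p, Or.inr rfl, h1⟩
      · exact ⟨k, Or.inl hk, h1.symm⟩
    rcases h2 with h2 | ⟨k, hk, h2⟩
    · subst h2; exact absurd h1' hcon
    · obtain ⟨l, hl, hy⟩ := h1'
      have : k = l := hf k l (by omega) (by omega) (h2.trans hy)
      subst this
      rw [← h2, hu k hk hl]
  · rintro rfl
    refine ⟨?_, Or.inr ⟨r, hr, rfl⟩⟩
    rcases hr' with h | h
    · exact Or.inr ⟨r, h, rfl⟩
    · exact Or.inl (by rw [h])

theorem core (P : Set α → Prop) (t n : ℕ) (ht : 3 ≤ t) (hn : 4 * t - 6 ≤ n)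
    (e : ZMod n → α) (he : Function.Injective e)
    (hP : ∀ i : ℤ, ∃ D, P D ∧ D.ncard = t ∧ seg e i (t - 1) ⊆ D)
    (i : ℤ) (C C' : Set α) (hCE : C ⊆ Set.range e) (hCE' : C' ⊆ Set.range e)
    (ho : ∀ D, P D → ∀ x, C ∩ D ≠ {x}) (ho' : ∀ D, P D → ∀ x, C' ∩ D ≠ {x})
    (hC : C.ncard = t) (hCs : seg e i (t - 1) ⊆ C)
    (hC' : C'.ncard = t) (hCs' : seg e (i + 2 * (t : ℤ) - 4) (t - 1) ⊆ C')
    (h1 : ¬ C ⊆ seg e i (3 * t - 5)) (h2 : ¬ C' ⊆ seg e i (3 * t - 5)) : False := by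
  have hinj := seg_inj e he i
  have i0 : i = i + 0 := by ring
  have hrep : ∀ x ∈ Set.range e, ∃ p : ℤ, (0 ≤ p ∧ p < n) ∧ x = e ((i + p : ℤ) : ZMod n) := by
    haveI : NeZero n := ⟨by omega⟩
    rintro _ ⟨z, rfl⟩
    refine ⟨((z - (i : ZMod n)).val : ℤ), ⟨by omega, ?_⟩, ?_⟩
    · exact_mod_cast ZMod.val_lt _
    · congr 1
      push_cast
      rw [ZMod.natCast_zmod_val]
      ring
  rw [i0, seg_eq] at h1 h2
  rw [i0] at hCs
  rw [show i + 2 * (t : ℤ) - 4 = i + (2 * (t : ℤ) - 4) by ring] at hCs'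
  obtain ⟨c, -, rfl⟩ := eq_insert_of_seg e he i 0 t (by omega) (by omega) (by omega) C hC hCs
  obtain ⟨c', -, rfl⟩ := eq_insert_of_seg e he i _ t (by omega) (by omega) (by omega) C' hC' hCs'
  obtain ⟨p, hp, rfl⟩ := hrep c (hCE (Set.mem_insert _ _))
  obtain ⟨p', hp', rfl⟩ := hrep c' (hCE' (Set.mem_insert _ _))
  have hp2 : 3 * (t : ℤ) - 5 ≤ p := by
    by_contra hlt
    apply h1
    rw [Set.insert_subset_iff]
    refine ⟨⟨p, ?_, rfl⟩, Set.image_mono ?_⟩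
    · simp only [Set.mem_Ico]; omega
    · intro k; simp only [Set.mem_Ico]; omega
  have hp2' : 3 * (t : ℤ) - 5 ≤ p' := by
    by_contra hlt
    apply h2
    rw [Set.insert_subset_iff]
    refine ⟨⟨p', ?_, rfl⟩, Set.image_mono ?_⟩
    · simp only [Set.mem_Ico]; omega
    · intro k; simp only [Set.mem_Ico]; omega
  have hpp : p = p' := by
    obtain ⟨D, hD, hDc, hDs⟩ := hP (i + ((t : ℤ) - 2))
    obtain ⟨d, hdn, rfl⟩ := eq_insert_of_seg e he i _ t (by omega) (by omega) (by omega) D hDc hDs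
    obtain ⟨k, hk, hd⟩ := ortho_step (fun k : ℤ => e ((i + k : ℤ) : ZMod n)) n (t - 1 : ℕ) 0
      ((t : ℤ) - 2) p ((t : ℤ) - 2) d hinj (by omega) (by omega) (by omega) (by omega) (by omega)
      (by omega) (ho _ hD)
    obtain ⟨k', hk', hd'⟩ := ortho_step (fun k : ℤ => e ((i + k : ℤ) : ZMod n)) n (t - 1 : ℕ)
      (2 * (t : ℤ) - 4)
      ((t : ℤ) - 2) p' (2 * (t : ℤ) - 4) d hinj (by omega) (by omega) (by omega) (by omega)
      (by omega) (by omega) (ho' _ hD)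
    have := hinj k k' (by omega) (by omega) (hd.symm.trans hd')
    omega
  subst hpp
  obtain ⟨q, hq⟩ : ∃ q : ℤ, 3 * (t : ℤ) - 5 ≤ q ∧ q ≤ p ∧ p < q + (t - 1 : ℕ) ∧
      q + (t - 1 : ℕ) ≤ n := by
    by_cases h : p + (t - 1 : ℕ) ≤ n
    · exact ⟨p, by omega⟩
    · exact ⟨n - (t - 1 : ℕ), by omega⟩
  obtain ⟨D, hD, hDc, hDs⟩ := hP (i + q)
  obtain ⟨d, hdn, rfl⟩ := eq_insert_of_seg e he i _ t (by omega) (by omega) (by omega) D hDc hDs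
  obtain ⟨k, hk, hd⟩ := ortho_step (fun k : ℤ => e ((i + k : ℤ) : ZMod n)) n (t - 1 : ℕ) 0
    q p p d hinj (by omega) (by omega) (by omega) (by omega) (by omega) (by omega) (ho _ hD)
  obtain ⟨k', hk', hd'⟩ := ortho_step (fun k : ℤ => e ((i + k : ℤ) : ZMod n)) n (t - 1 : ℕ)
    (2 * (t : ℤ) - 4) q p p d hinj (by omega) (by omega) (by omega) (by omega) (by omega)
    (by omega) (ho' _ hD)
  have hkk := hinj k k' (by omega) (by omega) (hd.symm.trans hd')
  have hkp : k = p := by omega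
  apply hdn
  refine ⟨p, ?_, ?_⟩
  · simp only [Set.mem_Ico]; omega
  · rw [hd, hkp]

/-- With `t ≥ 3` and `n ≥ 4t-6`: (i) there is no index `i` with `t`-element
circuits containing `X_i` and `X_{i+2t-4}` respectively, neither contained in
`σ[i, i+3t-6]`; (ii) likewise for cocircuits. -/
theorem statement_3 (M : Matroid α) (t n : ℕ) (ht : 3 ≤ t) (hn : 4 * t - 6 ≤ n)
    (e : ZMod n → α) (he : CyclicPropOrd M t e) :
    (¬ ∃ i : ℤ, ∃ C C' : Set α,
        Cct M C ∧ C.ncard = t ∧ seg e i (t - 1) ⊆ C ∧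
        Cct M C' ∧ C'.ncard = t ∧ seg e (i + 2 * (t : ℤ) - 4) (t - 1) ⊆ C' ∧
        ¬ C ⊆ seg e i (3 * t - 5) ∧ ¬ C' ⊆ seg e i (3 * t - 5)) ∧
    (¬ ∃ i : ℤ, ∃ C C' : Set α,
        Cct M✶ C ∧ C.ncard = t ∧ seg e i (t - 1) ⊆ C ∧
        Cct M✶ C' ∧ C'.ncard = t ∧ seg e (i + 2 * (t : ℤ) - 4) (t - 1) ⊆ C' ∧
        ¬ C ⊆ seg e i (3 * t - 5) ∧ ¬ C' ⊆ seg e i (3 * t - 5)) := by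
  obtain ⟨⟨hinj, hrange⟩, hP⟩ := he
  constructor
  · rintro ⟨i, C, C', hC, hCt, hCs, hC', hCt', hCs', h1, h2⟩
    have hC : M.IsCircuit C := hC
    have hC' : M.IsCircuit C' := hC'
    refine core (fun D => M.IsCocircuit D) t n ht hn e hinj (fun i => (hP i).2) i C C' ?_ ?_ ?_ ?_
      hCt hCs hCt' hCs' h1 h2
    · rw [hrange]; exact hC.subset_ground
    · rw [hrange]; exact hC'.subset_ground
    · intro D hD x; exact hC.inter_isCocircuit_ne_singleton hD
    · intro D hD x; exact hC'.inter_isCocircuit_ne_singleton hD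
  · rintro ⟨i, C, C', hC, hCt, hCs, hC', hCt', hCs', h1, h2⟩
    have hC : M.IsCocircuit C := hC
    have hC' : M.IsCocircuit C' := hC'
    refine core (fun D => M.IsCircuit D) t n ht hn e hinj (fun i => (hP i).1) i C C' ?_ ?_ ?_ ?_
      hCt hCs hCt' hCs' h1 h2
    · rw [hrange]; exact hC.subset_ground
    · rw [hrange]; exact hC'.subset_ground
    · intro D hD x; rw [Set.inter_comm]; exact Matroid.IsCircuit.inter_isCocircuit_ne_singleton hD hC
    · intro D hD x; rw [Set.inter_comm]; exact Matroid.IsCircuit.inter_isCocircuit_ne_singleton hD hC'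

end CyclicArr
end

section
/- Let t ≥ 1 be an integer and let M be a t-cyclic matroid. Then |E(M)| ≥ 2t−2 and |E(M)| is even. -/
open Set

namespace CyclicArr

variable {α : Type*}

/-- `M` has the cyclic `(t-1, t)`-property: it admits a cyclic `(t-1, t)`-ordering. -/
def HasCycProp (M : Matroid α) (t : ℕ) : Prop :=
  ∃ (n : ℕ) (e : ZMod n → α), CyclicPropOrd M t e

/-- `e` is an odd `t`-cyclic ordering of `M` (with `n ≥ t+1`): for all odd `i ∈ {1,…,n}`,
`{e_i, …, e_{i+t-1}}` is a `t`-element circuit and `{e_{i+1}, …, e_{i+t}}` is a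
`t`-element cocircuit. -/
def OddTCycOrd {n : ℕ} (M : Matroid α) (t : ℕ) (e : ZMod n → α) : Prop :=
  CyclicOrd M e ∧ t + 1 ≤ n ∧
  ∀ i : ℕ, Odd i → 1 ≤ i → i ≤ n →
    (Cct M (seg e (i : ℤ) t) ∧ (seg e (i : ℤ) t).ncard = t) ∧
    (Cct M✶ (seg e ((i : ℤ) + 1) t) ∧ (seg e ((i : ℤ) + 1) t).ncard = t)

/-- `e` is an even `t`-cyclic ordering of `M` (with `n ≥ t+1`): for all odd `i ∈ {1,…,n}`,
`{e_i, …, e_{i+t-1}}` is both a `t`-element circuit and a `t`-element cocircuit. -/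
def EvenTCycOrd {n : ℕ} (M : Matroid α) (t : ℕ) (e : ZMod n → α) : Prop :=
  CyclicOrd M e ∧ t + 1 ≤ n ∧
  ∀ i : ℕ, Odd i → 1 ≤ i → i ≤ n →
    Cct M (seg e (i : ℤ) t) ∧ Cct M✶ (seg e (i : ℤ) t) ∧ (seg e (i : ℤ) t).ncard = t

/-- `M` is `t`-cyclic: it admits an odd or even `t`-cyclic ordering. -/
def TCyclic (M : Matroid α) (t : ℕ) : Prop :=
  ∃ (n : ℕ) (e : ZMod n → α), OddTCycOrd M t e ∨ EvenTCycOrd M t e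

/-- The rank of a set `X` in a matroid `M`: the maximum cardinality of an
independent subset of `X` (for a finite matroid). -/
noncomputable def rkf (M : Matroid α) (X : Set α) : ℕ :=
  sSup {k | ∃ I, M.Indep I ∧ I ⊆ X ∧ I.ncard = k}

/-- The connectivity function `λ(X) = r(X) + r*(X) - |X|`, valued in `ℤ`. -/
noncomputable def lam (M : Matroid α) (X : Set α) : ℤ :=
  (rkf M X : ℤ) + (rkf M✶ X : ℤ) - (X.ncard : ℤ)

/-- The local connectivity `⊓(X, Y) = r(X) + r(Y) - r(X ∪ Y)`, valued in `ℤ`. -/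
noncomputable def pic (M : Matroid α) (X Y : Set α) : ℤ :=
  (rkf M X : ℤ) + (rkf M Y : ℤ) - (rkf M (X ∪ Y) : ℤ)

/-- `X` is exactly `k`-separating: `λ(X) = k - 1`. -/
noncomputable def ExactSep (M : Matroid α) (k : ℕ) (X : Set α) : Prop :=
  lam M X = (k : ℤ) - 1

/-- `(P_1, …, P_m)` is a concatenation of the cyclic ordering `e`, where `P i` is the
block of `l i` consecutive elements starting at position `a i`, and the blocks occur in
cyclic order and partition the ground set. -/
def IsConcat {n m : ℕ} (e : ZMod n → α) (P : ZMod m → Set α) (a l : ZMod m → ℕ) : Prop :=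
  (∀ i, 1 ≤ l i) ∧
  (∀ i, ((a (i + 1) : ZMod n)) = ((a i + l i : ℕ) : ZMod n)) ∧
  (∀ i, P i = seg e (a i : ℤ) (l i)) ∧
  Set.univ.PairwiseDisjoint P ∧
  (⋃ i, P i) = Set.range e

/-- `(P_1, …, P_m)` is a `k`-flower of `M`: a partition of the ground set into nonempty
sets, each exactly `k`-separating, with consecutive unions exactly `k`-separating. -/
noncomputable def IsFlower (M : Matroid α) (k : ℕ) {m : ℕ} (P : ZMod m → Set α) : Prop :=
  2 ≤ m ∧
  Set.univ.PairwiseDisjoint P ∧ (⋃ i, P i) = M.E ∧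
  (∀ i, (P i).Nonempty) ∧
  (∀ i, ExactSep M k (P i)) ∧
  (3 ≤ m → ∀ i, ExactSep M k (P i ∪ P (i + 1)))

/-- `I ⊆ ZMod m` is a set of consecutive members in the cyclic order. -/
def CycInterval {m : ℕ} (I : Set (ZMod m)) : Prop :=
  ∃ (a : ZMod m) (len : ℕ), 0 < len ∧ I = (fun k : ℕ => a + (k : ZMod m)) '' Set.Iio len

/-- A `k`-daisy: a `k`-flower in which the union of a proper nonempty collection of
petals is exactly `k`-separating precisely when the petals are consecutive. -/
noncomputable def IsDaisy (M : Matroid α) (k : ℕ) {m : ℕ} (P : ZMod m → Set α) : Prop :=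
  IsFlower M k P ∧
  ∀ I : Set (ZMod m), I.Nonempty → I ≠ Set.univ →
    (ExactSep M k (⋃ i ∈ I, P i) ↔ CycInterval I)

/-- A `k`-anemone: a `k`-flower in which the union of every proper nonempty collection
of petals is exactly `k`-separating. -/
noncomputable def IsAnemone (M : Matroid α) (k : ℕ) {m : ℕ} (P : ZMod m → Set α) : Prop :=
  IsFlower M k P ∧
  ∀ I : Set (ZMod m), I.Nonempty → I ≠ Set.univ → ExactSep M k (⋃ i ∈ I, P i)


lemma key {n : ℕ} (M : Matroid α) (e : ZMod n → α) (he : Function.Injective e) (t : ℕ)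
    (ht : 1 ≤ t) (hn : 2 * t - 1 ≤ n) (i j : ℤ) (hij : (n : ℤ) ∣ i + t - 1 - j)
    (h1 : Cct M (seg e i t)) (h2 : Cct M✶ (seg e j t)) : False := by
  have h1' : M.IsCircuit (seg e i t) := h1
  have h2' : M.IsCocircuit (seg e j t) := h2
  refine h1'.inter_isCocircuit_ne_singleton (e := e ((j : ℤ) : ZMod n)) h2' ?_
  obtain ⟨c, hc⟩ := hij
  ext x
  simp only [seg, mem_inter_iff, mem_image, mem_Iio, mem_singleton_iff]
  constructor
  · rintro ⟨⟨k, hk, rfl⟩, l, hl, h⟩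
    have h := he h
    rw [ZMod.intCast_eq_intCast_iff_dvd_sub] at h
    obtain ⟨d, hd⟩ := h
    have h3 : (t : ℤ) - 1 - k + l = n * (c - d) := by
      rw [mul_sub, ← hc, ← hd]; ring
    have h4 : (t : ℤ) - 1 - k + l = 0 := by
      apply Int.eq_zero_of_abs_lt_dvd (Dvd.intro _ h3.symm)
      rw [abs_of_nonneg (by omega)]
      omega
    have hl0 : l = 0 := by omega
    have hkt : (k : ℤ) = t - 1 := by omega
    congr 1
    rw [ZMod.intCast_eq_intCast_iff_dvd_sub]
    refine ⟨-c, ?_⟩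
    rw [mul_neg, ← hc, hkt]; ring
  · rintro rfl
    refine ⟨⟨t - 1, by omega, ?_⟩, 0, by omega, by simp⟩
    congr 1
    rw [ZMod.intCast_eq_intCast_iff_dvd_sub]
    refine ⟨-c, ?_⟩
    rw [mul_neg, ← hc]
    push_cast [ht]; ring

lemma rank_aux (M : Matroid α) (C : Set α) (t : ℕ) (ht : 1 ≤ t) (h : Cct M C) (hC : C.ncard = t) :
    ((t - 1 : ℕ) : ℕ∞) ≤ M.eRank := by
  have h' : M.IsCircuit C := h
  obtain ⟨x, hx⟩ := h'.nonempty
  have hfin : C.Finite := Set.finite_of_ncard_pos (by omega)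
  refine le_trans ?_ (h'.diff_singleton_indep hx).encard_le_eRank
  rw [← (hfin.diff).cast_ncard_eq, Set.ncard_diff_singleton_of_mem hx, hC]

lemma size_aux (M : Matroid α) (C D : Set α) (t : ℕ) (ht : 1 ≤ t) (hE : M.E.Finite)
    (h : Cct M C) (hC : C.ncard = t) (h' : Cct M✶ D) (hD : D.ncard = t) :
    2 * t - 2 ≤ M.E.ncard := by
  have h1 := add_le_add (rank_aux M C t ht h hC) (rank_aux _ D t ht h' hD)
  rw [Matroid.eRank_add_eRank_dual, ← hE.cast_ncard_eq] at h1
  have : t - 1 + (t - 1) ≤ M.E.ncard := by exact_mod_cast h1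
  omega

/-- If `t ≥ 1` and `M` is a `t`-cyclic matroid, then `|E(M)| ≥ 2t - 2`
and `|E(M)|` is even. -/
theorem statement_8 (M : Matroid α) (t : ℕ) (ht : 1 ≤ t) (h : TCyclic M t) :
    2 * t - 2 ≤ M.E.ncard ∧ Even M.E.ncard := by
  obtain ⟨n, e, h⟩ := h
  have hc : CyclicOrd M e := by
    rcases h with h | h <;> exact h.1
  have hn : t + 1 ≤ n := by
    rcases h with h | h <;> exact h.2.1
  obtain ⟨he, hr⟩ := hc
  haveI : NeZero n := ⟨by omega⟩
  have hcard : M.E.ncard = n := by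
    rw [← hr, ← Set.image_univ, Set.ncard_image_of_injective _ he, Set.ncard_univ, Nat.card_zmod]
  have hE : M.E.Finite := hr ▸ Set.finite_range e
  have hsize : 2 * t - 2 ≤ M.E.ncard := by
    rcases h with ⟨-, -, h⟩ | ⟨-, -, h⟩
    · obtain ⟨⟨a, b⟩, c, d⟩ := h 1 odd_one le_rfl (by omega)
      exact size_aux M _ _ t ht hE a b c d
    · obtain ⟨a, c, b⟩ := h 1 odd_one le_rfl (by omega)
      exact size_aux M _ _ t ht hE a b c b
  refine ⟨hsize, ?_⟩
  rw [hcard] at hsize ⊢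
  by_contra hodd
  rw [Nat.not_even_iff_odd] at hodd
  have hodd' := Nat.odd_iff.1 hodd
  have hn2 : 2 * t - 1 ≤ n := by omega
  rcases h with ⟨-, -, h⟩ | ⟨-, -, h⟩
  · rcases Nat.even_or_odd' t with ⟨s, hs | hs⟩
    · refine key M e he t ht hn2 _ _ ?_ (h 1 odd_one le_rfl (by omega)).1.1
        (h (t - 1) (Nat.odd_iff.2 (by omega)) (by omega) (by omega)).2.1
      push_cast [ht]; ring_nf; simp
    · by_cases h1 : t = 1
      · refine key M e he t ht hn2 _ _ ?_ (h 1 odd_one le_rfl (by omega)).1.1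
          (h n hodd (by omega) le_rfl).2.1
        subst h1
        exact ⟨-1, by push_cast; ring⟩
      · refine key M e he t ht hn2 _ _ ?_ (h n hodd (by omega) le_rfl).1.1
          (h (t - 2) (Nat.odd_iff.2 (by omega)) (by omega) (by omega)).2.1
        have : 2 ≤ t := by omega
        exact ⟨1, by push_cast [this]; ring⟩
  · rcases Nat.even_or_odd' t with ⟨s, hs | hs⟩
    · refine key M e he t ht hn2 _ _ ?_ (h n hodd (by omega) le_rfl).1
          (h (t - 1) (Nat.odd_iff.2 (by omega)) (by omega) (by omega)).2.1
      exact ⟨1, by push_cast [ht]; ring⟩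
    · refine key M e he t ht hn2 _ _ ?_ (h 1 odd_one le_rfl (by omega)).1
        (h t (Nat.odd_iff.2 (by omega)) (by omega) (by omega)).2.1
      exact ⟨0, by push_cast; ring⟩

end CyclicArr
end
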